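/- There is an absolute constant C, and for every ε > 0 there is δ > 0, such that the following holds. Let G be a finite group, π an irreducible unitary representation of G on a nonzero finite-dimensional complex inner product space, μ a symmetric probability measure on G, and l₁ > 0 an integer. Suppose that for every symmetric set A ⊆ G satisfying μ^{*(l)}(A) ≥ |G|^{−ε} for some integer l ≥ l₁, one has either |Π₃A| ≥ |G|^ε · |A| or |A| ≥ (dim π)^{−1/3}·|G|. Then the operator norm of π(μ) = Σ_{g∈G} μ(g)·π(g) satisfies ‖π(μ)‖ < (C · dim π)^{−δ/l₁}. -/

import Mathlib

open scoped BigOperators Matrix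

namespace Paper

abbrev V (p d : ℕ) : Type := Fin d → ZMod p
abbrev SL (p d : ℕ) : Type := Matrix.SpecialLinearGroup (Fin d) (ZMod p)

/-- The group `F_p^d ⋊ SL_d(F_p)` with multiplication
`(v₁,θ₁)·(v₂,θ₂) = (v₁+θ₁v₂, θ₁θ₂)`. -/
def Aff (p d : ℕ) : Type := V p d × SL p d

namespace Aff

variable {p d : ℕ}

/-- the translation part `v(g)` -/
def vec (g : Aff p d) : V p d := g.1

/-- the linear part `θ(g)` -/
def lin (g : Aff p d) : SL p d := g.2

def mk (v : V p d) (θ : SL p d) : Aff p d := (v, θ)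

instance : Mul (Aff p d) :=
  ⟨fun g h => (g.1 + (g.2 : Matrix (Fin d) (Fin d) (ZMod p)) *ᵥ h.1, g.2 * h.2)⟩

instance : One (Aff p d) := ⟨((0 : V p d), (1 : SL p d))⟩

instance : Inv (Aff p d) :=
  ⟨fun g => (-(((g.2)⁻¹ : SL p d) : Matrix (Fin d) (Fin d) (ZMod p)) *ᵥ g.1, (g.2)⁻¹)⟩

lemma mul_def (g h : Aff p d) :
    g * h = (g.1 + (g.2 : Matrix (Fin d) (Fin d) (ZMod p)) *ᵥ h.1, g.2 * h.2) := rfl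

instance : Group (Aff p d) where
  mul_assoc a b c := by
    refine Prod.ext ?_ ?_
    · show (a.1 + (a.2 : Matrix (Fin d) (Fin d) (ZMod p)) *ᵥ b.1) +
        ((a.2 * b.2 : SL p d) : Matrix (Fin d) (Fin d) (ZMod p)) *ᵥ c.1 =
        a.1 + (a.2 : Matrix (Fin d) (Fin d) (ZMod p)) *ᵥ
          (b.1 + (b.2 : Matrix (Fin d) (Fin d) (ZMod p)) *ᵥ c.1)
      simp [Matrix.mulVec_add, Matrix.mulVec_mulVec, add_assoc]
    · show a.2 * b.2 * c.2 = a.2 * (b.2 * c.2)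
      exact mul_assoc _ _ _
  one_mul a := by
    refine Prod.ext ?_ ?_
    · show (0 : V p d) + ((1 : SL p d) : Matrix (Fin d) (Fin d) (ZMod p)) *ᵥ a.1 = a.1
      simp
    · show (1 : SL p d) * a.2 = a.2
      exact one_mul _
  mul_one a := by
    refine Prod.ext ?_ ?_
    · show a.1 + (a.2 : Matrix (Fin d) (Fin d) (ZMod p)) *ᵥ (0 : V p d) = a.1
      simp
    · show a.2 * 1 = a.2
      exact mul_one _
  inv_mul_cancel a := by
    refine Prod.ext ?_ ?_
    · show -(((a.2)⁻¹ : SL p d) : Matrix (Fin d) (Fin d) (ZMod p)) *ᵥ a.1 +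
        (((a.2)⁻¹ : SL p d) : Matrix (Fin d) (Fin d) (ZMod p)) *ᵥ a.1 = (0 : V p d)
      rw [Matrix.neg_mulVec]
      exact neg_add_cancel _
    · show (a.2)⁻¹ * a.2 = 1
      exact inv_mul_cancel _

instance : DecidableEq (SL p d) :=
  inferInstanceAs (DecidableEq {A : Matrix (Fin d) (Fin d) (ZMod p) // A.det = 1})

instance : DecidableEq (Aff p d) := inferInstanceAs (DecidableEq (V p d × SL p d))

instance [NeZero p] : Fintype (Aff p d) := inferInstanceAs (Fintype (V p d × SL p d))

/-- the action of `Aff p d` on `F_p^d`: `g.x = v(g) + θ(g) x`. -/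
def aact (g : Aff p d) (x : V p d) : V p d :=
  g.vec + (g.lin : Matrix (Fin d) (Fin d) (ZMod p)) *ᵥ x

end Aff

/-- Dirac measure at a point -/
def dirac {β : Type*} [DecidableEq β] (x : β) : β → ℝ := fun y => if y = x then 1 else 0

/-- probability measure (density w.r.t. counting measure) on a finite set -/
def IsProb {β : Type*} [Fintype β] (μ : β → ℝ) : Prop :=
  (∀ x, 0 ≤ μ x) ∧ ∑ x, μ x = 1

/-- convolution of measures on a finite group -/
def conv {H : Type*} [Group H] [Fintype H] (μ ν : H → ℝ) : H → ℝ :=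
  fun g => ∑ h, μ h * ν (h⁻¹ * g)

/-- `l`-fold convolution `μ^{*(l)}` -/
def itconv {H : Type*} [Group H] [Fintype H] [DecidableEq H] (μ : H → ℝ) : ℕ → H → ℝ
  | 0 => dirac 1
  | n + 1 => conv (itconv μ n) μ

/-- `μ̌(g) = μ(g⁻¹)` -/
def check {H : Type*} [Group H] (μ : H → ℝ) : H → ℝ := fun g => μ g⁻¹

/-- the uniform probability measure on a finite subset -/
noncomputable def unif {H : Type*} [DecidableEq H] (S : Finset H) : H → ℝ :=
  fun g => if g ∈ S then ((S.card : ℝ))⁻¹ else 0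

/-- `L²` norm (counting measure) of a complex-valued function on a finite set -/
noncomputable def cnorm2 {β : Type*} [Fintype β] (f : β → ℂ) : ℝ :=
  Real.sqrt (∑ x, ‖f x‖ ^ 2)

/-- the averaging operator `L(μ)` on `ℂ[H]` -/
noncomputable def avgOp {H : Type*} [Group H] [Fintype H] (μ : H → ℝ) (f : H → ℂ) : H → ℂ :=
  fun g => ∑ s, (μ s : ℂ) * f (s⁻¹ * g)

/-- `‖L₀(μ)‖`: the operator norm, w.r.t. the `L²` norm for counting measure, of the
averaging operator `L(μ)` restricted to the functions with zero sum -/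
noncomputable def L0norm {H : Type*} [Group H] [Fintype H] (μ : H → ℝ) : ℝ :=
  sSup {r : ℝ | ∃ f : H → ℂ, (∑ g, f g) = 0 ∧ cnorm2 f ≤ 1 ∧ r = cnorm2 (avgOp μ f)}

/-- `L²` norm (counting measure) of a real-valued function on a finite set -/
noncomputable def norm2V {β : Type*} [Fintype β] (η : β → ℝ) : ℝ :=
  Real.sqrt (∑ x, (η x) ^ 2)

variable {p d : ℕ}

/-- the convolution `μ.ν` of a measure on `Aff p d` with a measure on `F_p^d`:
`(μ.ν)(x) = ∑_g μ(g)·ν(g⁻¹.x)` -/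
def actConv [NeZero p] (μ : Aff p d → ℝ) (ν : V p d → ℝ) : V p d → ℝ :=
  fun x => ∑ g : Aff p d, μ g * ν (Aff.aact g⁻¹ x)

/-- pushforward of a measure on `Aff p d` under the projection `θ` to the linear part -/
def push [NeZero p] (μ : Aff p d → ℝ) : SL p d → ℝ :=
  fun σ => ∑ g : Aff p d, if Aff.lin g = σ then μ g else 0

/-- `‖L₀^θ(μ)‖` -/
noncomputable def L0theta [NeZero p] (μ : Aff p d → ℝ) : ℝ := L0norm (push μ)

/-- the pairing `⟨x,ξ⟩` in `F_p` -/
def ip (x ξ : V p d) : ZMod p := ∑ i, x i * ξ i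

/-- `e(t) = e^{-2πit/p}` -/
noncomputable def ee (p : ℕ) (t : ZMod p) : ℂ :=
  Complex.exp (-(2 * Real.pi * Complex.I) * (t.val : ℂ) / (p : ℂ))

/-- the Fourier transform on `F_p^d` -/
noncomputable def fourier [NeZero p] (f : V p d → ℂ) (ξ : V p d) : ℂ :=
  ∑ x, ee p (ip x ξ) * f x

/-- the normalized `L̂⁴` norm on the Fourier side -/
noncomputable def hatNorm4 [NeZero p] (φ : V p d → ℂ) : ℝ :=
  (((p : ℝ) ^ d)⁻¹ * ∑ ξ, ‖φ ξ‖ ^ 4) ^ ((1 : ℝ) / 4)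

/-!
Write `N = |G|` and `d = dim π`. Schur orthogonality gives `‖π(f)‖² ≤ (N / d) ‖f‖₂²`, so for large
`d` it is enough to flatten some `μ^{*(l)}`. Among the scales `l = 4ʲ l₁` with `j < J` there is one
at which `‖μ^{*(l)}‖₂²` drops by less than a factor `K`, a small power of `N`, when `l` is replaced
by `4l`. For `w = μ^{*(2l)}` this says that `w * w` has large energy, and a
Balog–Szemerédi–Gowers argument turns this into a symmetric set of large mass and small tripling:
let `f` be the law of the midpoint of a two-step `w`-walk ending at a well-chosen `t`, and take the
set where `f * f̌` is large. By hypothesis this set has size at least `d^{-1/3} N`, which forces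
`max w` to be small. The Schur bound then controls `π(w)`, once the hypothesis has been applied
again to bound the mass of a superlevel set of `w`.

For bounded `d` it is enough to bound the norm away from `1`. The set of `g` moving a unit vector by
at most `3^{-j}` has its triple product in the set for `3^{1-j}`, so for some `j ≤ J` it does not
grow; by Schur orthogonality it has at most `4N / d` elements. By hypothesis it cannot carry most of
the mass, hence every unit vector is moved by a definite amount on average. If `d` is smaller still,
the claimed bound exceeds `1`.
-/

section Convolution

variable {H : Type*} [Group H] {μ ν : H → ℝ}

lemma check_check (μ : H → ℝ) : check (check μ) = μ := by
  funext g
  simp [check]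

variable [Fintype H]

lemma conv_nonneg (hμ : ∀ g, 0 ≤ μ g) (hν : ∀ g, 0 ≤ ν g) (g : H) : 0 ≤ conv μ ν g :=
  Finset.sum_nonneg fun _ _ => mul_nonneg (hμ _) (hν _)

lemma sum_conv_smul {M : Type*} [AddCommMonoid M] [Module ℝ M] (μ ν : H → ℝ) (F : H → M) :
    ∑ g, conv μ ν g • F g = ∑ h, ∑ k, (μ h * ν k) • F (h * k) := by
  simp only [conv, Finset.sum_smul]
  rw [Finset.sum_comm]
  refine Finset.sum_congr rfl fun h _ => ?_
  rw [← Equiv.sum_comp (Equiv.mulLeft h)]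
  simp only [Equiv.coe_mulLeft, inv_mul_cancel_left]

lemma sum_conv (μ ν : H → ℝ) : ∑ g, conv μ ν g = (∑ g, μ g) * ∑ g, ν g := by
  simpa only [smul_eq_mul, mul_one, ← Finset.sum_mul_sum] using
    sum_conv_smul μ ν (fun _ => (1 : ℝ))

lemma conv_assoc (μ ν ρ : H → ℝ) : conv (conv μ ν) ρ = conv μ (conv ν ρ) := by
  funext g
  calc conv (conv μ ν) ρ g = ∑ h, ∑ k, μ h * ν k * ρ ((h * k)⁻¹ * g) :=
        sum_conv_smul μ ν fun h => ρ (h⁻¹ * g)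
    _ = conv μ (conv ν ρ) g := by simp only [conv, Finset.mul_sum, mul_assoc, mul_inv_rev]

lemma conv_apply_one_comm (μ ν : H → ℝ) : conv μ ν 1 = conv ν μ 1 := by
  unfold conv
  rw [← Equiv.sum_comp (Equiv.inv H)]
  simp [mul_comm]

lemma check_conv (μ ν : H → ℝ) : check (conv μ ν) = conv (check ν) (check μ) := by
  funext g
  unfold check conv
  rw [← Equiv.sum_comp (Equiv.mulLeft g⁻¹)]
  simp [mul_comm]

lemma conv_check_right_apply (μ : H → ℝ) (g : H) :
    conv μ (check μ) g = ∑ x, μ x * μ (g⁻¹ * x) := by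
  simp [conv, check]

lemma conv_check_left_apply (μ : H → ℝ) (g : H) :
    conv (check μ) μ g = ∑ x, μ x * μ (x * g) := by
  unfold conv check
  rw [← Equiv.sum_comp (Equiv.inv H)]
  simp

lemma conv_check_apply_one (μ : H → ℝ) : conv μ (check μ) 1 = ∑ g, μ g ^ 2 := by
  simp [conv_check_right_apply, sq]

lemma conv_check_apply_le (μ : H → ℝ) (g : H) : conv μ (check μ) g ≤ ∑ x, μ x ^ 2 := by
  have htranslate : ∑ x, μ (g⁻¹ * x) ^ 2 = ∑ x, μ x ^ 2 :=
    Equiv.sum_comp (Equiv.mulLeft g⁻¹) fun x => μ x ^ 2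
  rw [conv_check_right_apply]
  calc ∑ x, μ x * μ (g⁻¹ * x) ≤ ∑ x, (μ x ^ 2 + μ (g⁻¹ * x) ^ 2) / 2 :=
        Finset.sum_le_sum fun x _ => by nlinarith [sq_nonneg (μ x - μ (g⁻¹ * x))]
    _ = ∑ x, μ x ^ 2 := by rw [← Finset.sum_div, Finset.sum_add_distrib, htranslate]; ring

lemma sum_sq_conv_check_comm (μ : H → ℝ) :
    ∑ g, conv μ (check μ) g ^ 2 = ∑ g, conv (check μ) μ g ^ 2 := by
  simp only [← conv_check_apply_one, check_conv, check_check]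
  rw [conv_assoc, conv_apply_one_comm, conv_assoc, conv_assoc, conv_assoc]

lemma sum_sum_mul_inv_mul (μ F : H → ℝ) :
    ∑ x, ∑ y, μ x * μ y * F (x⁻¹ * y) = ∑ g, conv (check μ) μ g * F g := by
  have h := sum_conv_smul (check μ) μ F
  rw [← Equiv.sum_comp (Equiv.inv H) fun x => ∑ y, (check μ x * μ y) • F (x * y)] at h
  simpa only [smul_eq_mul, check, Equiv.inv_apply, inv_inv] using h.symm

lemma IsProb.conv (hμ : IsProb μ) (hν : IsProb ν) : IsProb (conv μ ν) :=
  ⟨conv_nonneg hμ.1 hν.1, by rw [sum_conv, hμ.2, hν.2, one_mul]⟩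

lemma IsProb.check (hμ : IsProb μ) : IsProb (check μ) :=
  ⟨fun _ => hμ.1 _, (Equiv.sum_comp (Equiv.inv H) μ).trans hμ.2⟩

lemma IsProb.conv_le (hμ : IsProb μ) {P : ℝ} (hν : ∀ g, ν g ≤ P) (g : H) : Paper.conv μ ν g ≤ P :=
  calc Paper.conv μ ν g ≤ ∑ h, μ h * P :=
        Finset.sum_le_sum fun h _ => mul_le_mul_of_nonneg_left (hν _) (hμ.1 h)
    _ = P := by rw [← Finset.sum_mul, hμ.2, one_mul]

section Powers

variable [DecidableEq H]

lemma conv_dirac_one (μ : H → ℝ) : conv μ (dirac 1) = μ := by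
  funext g
  simp [conv, dirac, inv_mul_eq_one]

lemma dirac_one_conv (μ : H → ℝ) : conv (dirac 1) μ = μ := by
  funext g
  simp [conv, dirac]

lemma itconv_add (μ : H → ℝ) (m n : ℕ) :
    itconv μ (m + n) = conv (itconv μ m) (itconv μ n) := by
  induction n with
  | zero => exact (conv_dirac_one _).symm
  | succ n ih => rw [← add_assoc, itconv, itconv, ih, conv_assoc]

lemma itconv_two_mul (μ : H → ℝ) (n : ℕ) :
    itconv μ (2 * n) = conv (itconv μ n) (itconv μ n) := by
  rw [two_mul, itconv_add]

lemma itconv_succ' (μ : H → ℝ) (n : ℕ) : itconv μ (n + 1) = conv μ (itconv μ n) := by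
  rw [add_comm, itconv_add, itconv, itconv, dirac_one_conv]

lemma check_itconv (hμ : check μ = μ) (n : ℕ) : check (itconv μ n) = itconv μ n := by
  induction n with
  | zero => funext g; simp [check, itconv, dirac]
  | succ n ih => rw [itconv, check_conv, hμ, ih, ← itconv_succ', itconv]

end Powers

end Convolution

section Probability

variable {β : Type*} [Fintype β] {q : β → ℝ}

lemma isProb_dirac [DecidableEq β] (x : β) : IsProb (dirac x) :=
  ⟨fun y => by unfold dirac; split_ifs <;> norm_num, by simp [dirac]⟩

lemma IsProb.itconv {H : Type*} [Group H] [Fintype H] [DecidableEq H] {μ : H → ℝ}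
    (h : IsProb μ) (n : ℕ) : IsProb (itconv μ n) := by
  induction n with
  | zero => exact isProb_dirac 1
  | succ n ih => exact ih.conv h

lemma IsProb.sum_le_one (hq : IsProb q) (A : Finset β) : ∑ x ∈ A, q x ≤ 1 :=
  (Finset.sum_le_univ_sum_of_nonneg hq.1).trans_eq hq.2

lemma IsProb.sum_compl [DecidableEq β] (hq : IsProb q) (A : Finset β) :
    ∑ x ∈ Aᶜ, q x = 1 - ∑ x ∈ A, q x := by
  rw [← hq.2, ← Finset.sum_add_sum_compl A q, add_sub_cancel_left]

lemma IsProb.inv_card_le_sum_sq (hq : IsProb q) : (Fintype.card β : ℝ)⁻¹ ≤ ∑ x, q x ^ 2 := by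
  have h := sq_sum_le_card_mul_sum_sq (s := Finset.univ) (f := q)
  rw [hq.2, one_pow, Finset.card_univ] at h
  have hcard : (0 : ℝ) < Fintype.card β :=
    (Nat.cast_nonneg _).lt_of_ne fun h0 => by rw [← h0, zero_mul] at h; exact h.not_gt one_pos
  exact (inv_le_iff_one_le_mul₀' hcard).2 h

lemma IsProb.sum_sq_le_one (hq : IsProb q) : ∑ x, q x ^ 2 ≤ 1 := by
  rw [← hq.2]
  refine Finset.sum_le_sum fun x _ => pow_le_of_le_one (hq.1 x) ?_ two_ne_zero
  simpa using hq.sum_le_one {x}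

/-- The superlevel set `{x | η < q x}` of a function on a finite type, as a finset. -/
noncomputable def superlevel (q : β → ℝ) (η : ℝ) : Finset β := Finset.univ.filter (η < q ·)

@[simp]
lemma mem_superlevel {η : ℝ} {x : β} : x ∈ superlevel q η ↔ η < q x := by
  simp [superlevel]

lemma inv_mem_superlevel {H : Type*} [Group H] [Fintype H] {q : H → ℝ} (hq : check q = q) {η : ℝ}
    {x : H} (hx : x ∈ superlevel q η) : x⁻¹ ∈ superlevel q η := by
  rw [mem_superlevel] at hx ⊢
  exact hx.trans_eq (congrFun hq x).symm

lemma IsProb.card_superlevel_mul_lt_one (hq : IsProb q) (η : ℝ) :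
    (superlevel q η).card * η < 1 := by
  rcases (superlevel q η).eq_empty_or_nonempty with h | h
  · simp [h]
  · calc (superlevel q η).card * η = ∑ _x ∈ superlevel q η, η := by simp
      _ < ∑ x ∈ superlevel q η, q x :=
          Finset.sum_lt_sum_of_nonempty h fun x hx => mem_superlevel.1 hx
      _ ≤ 1 := hq.sum_le_one _

lemma IsProb.sum_sq_compl_superlevel_le [DecidableEq β] (hq : IsProb q) {η : ℝ} (hη : 0 ≤ η) :
    ∑ x ∈ (superlevel q η)ᶜ, q x ^ 2 ≤ η :=
  calc ∑ x ∈ (superlevel q η)ᶜ, q x ^ 2 ≤ ∑ x ∈ (superlevel q η)ᶜ, η * q x :=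
        Finset.sum_le_sum fun x hx => by
          rw [sq]
          exact mul_le_mul_of_nonneg_right (by simpa using hx) (hq.1 x)
    _ ≤ η := by
        rw [← Finset.mul_sum]
        exact mul_le_of_le_one_right hη (hq.sum_le_one _)

end Probability

section SmallTripling

open scoped Pointwise

variable {H : Type*} [Group H]

/-- The weight `f(x) f(y)` of the pair with first entry `x` and quotient `x y⁻¹ = s`; summing over
`x` gives `f * f̌` at `s`. -/
def pairWeight (f : H → ℝ) (s x : H) : ℝ := f x * f (s⁻¹ * x)

lemma pairWeight_nonneg {f : H → ℝ} (hf : ∀ x, 0 ≤ f x) (s x : H) : 0 ≤ pairWeight f s x :=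
  mul_nonneg (hf _) (hf _)

variable [Fintype H]

section Weight

variable {f χ : H → ℝ} {B θ : ℝ}

lemma conv_check_le_of_le (hf : IsProb f) (hB : ∀ x, f x ≤ B) (s : H) :
    conv f (check f) s ≤ B :=
  hf.conv_le (fun _ => hB _) s

lemma le_mul_sum_superlevel_conv_check [DecidableEq H] (hf : IsProb f) (hB : ∀ x, f x ≤ B)
    {X : Finset H} (hX : ∑ u ∈ Xᶜ, conv (check f) f u ≤ 1 / 2) (hθ : 0 ≤ θ)
    (hθX : 8 * (X.card * θ) ≤ 1) :
    θ ≤ B * ∑ s ∈ superlevel (conv f (check f)) θ, conv f (check f) s := by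
  have hr : IsProb (conv f (check f)) := hf.conv hf.check
  have henergy : 1 / 4 ≤ X.card * ∑ s, conv f (check f) s ^ 2 := by
    rw [(hf.check.conv hf).sum_compl] at hX
    rw [sum_sq_conv_check_comm]
    calc (1 / 4 : ℝ) ≤ (∑ u ∈ X, conv (check f) f u) ^ 2 := by nlinarith
      _ ≤ X.card * ∑ u ∈ X, conv (check f) f u ^ 2 := sq_sum_le_card_mul_sum_sq
      _ ≤ X.card * ∑ u, conv (check f) f u ^ 2 := by
          gcongr
          exact X.subset_univ
  have hcard : (0 : ℝ) < X.card :=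
    X.card.cast_nonneg.lt_of_ne fun h => by rw [← h, zero_mul] at henergy; norm_num at henergy
  have hlarge : 2 * θ ≤ ∑ s, conv f (check f) s ^ 2 :=
    le_of_mul_le_mul_left (by linarith) hcard
  have hsmall := hr.sum_sq_compl_superlevel_le hθ
  have hsuper : ∑ s ∈ superlevel (conv f (check f)) θ, conv f (check f) s ^ 2 ≤
      B * ∑ s ∈ superlevel (conv f (check f)) θ, conv f (check f) s := by
    rw [Finset.mul_sum]
    refine Finset.sum_le_sum fun s _ => ?_
    rw [sq]
    exact mul_le_mul_of_nonneg_right (conv_check_le_of_le hf hB s) (hr.1 s)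
  rw [← Finset.sum_add_sum_compl (superlevel (conv f (check f)) θ)] at hlarge
  linarith

lemma sum_pairWeight (f : H → ℝ) (s : H) : ∑ x, pairWeight f s x = conv f (check f) s :=
  (conv_check_right_apply f s).symm

lemma sum_pairWeight_mul_pairWeight_le (hf : ∀ x, 0 ≤ f x) (hB : ∀ x, f x ≤ B)
    (hχ : ∀ u, 0 ≤ χ u) (s t : H) :
    ∑ x, ∑ y, pairWeight f s x * pairWeight f t y * χ ((s⁻¹ * x)⁻¹ * y) ≤
      B ^ 2 * ∑ u, conv (check f) f u * χ u := by
  have hB0 : 0 ≤ B := (hf 1).trans (hB 1)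
  rw [← sum_sum_mul_inv_mul, Finset.mul_sum, ← Equiv.sum_comp (Equiv.mulLeft s)]
  refine Finset.sum_le_sum fun x _ => ?_
  rw [Finset.mul_sum]
  refine Finset.sum_le_sum fun y _ => ?_
  simp only [pairWeight, Equiv.coe_mulLeft, inv_mul_cancel_left]
  have hprod : f (s * x) * f (t⁻¹ * y) ≤ B ^ 2 := by
    rw [sq]
    exact mul_le_mul (hB _) (hB _) (hf _) hB0
  calc f (s * x) * f x * (f y * f (t⁻¹ * y)) * χ (x⁻¹ * y)
      = f (s * x) * f (t⁻¹ * y) * (f x * f y * χ (x⁻¹ * y)) := by ring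
    _ ≤ B ^ 2 * (f x * f y * χ (x⁻¹ * y)) :=
        mul_le_mul_of_nonneg_right hprod (mul_nonneg (mul_nonneg (hf _) (hf _)) (hχ _))

lemma conv_conv_conv_check_apply (f χ : H → ℝ) (g : H) :
    conv (conv (conv f χ) χ) (check f) g =
      ∑ x, ∑ u, ∑ v, f x * χ u * (χ v * f (g⁻¹ * (x * u * v))) := by
  rw [conv_assoc]
  calc conv (conv f χ) (conv χ (check f)) g
      = ∑ x, ∑ u, f x * χ u * conv χ (check f) ((x * u)⁻¹ * g) :=
        sum_conv_smul f χ fun h => conv χ (check f) (h⁻¹ * g)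
    _ = _ := by simp only [conv, check, Finset.mul_sum, mul_inv_rev, inv_inv, mul_assoc]

lemma sum_pairWeight_mul_pairWeight_mul_pairWeight_le (hf : ∀ x, 0 ≤ f x) (hB : ∀ x, f x ≤ B)
    (hχ : ∀ u, 0 ≤ χ u) (s₁ s₂ s₃ : H) :
    ∑ x, ∑ y, ∑ z, pairWeight f s₁ x * pairWeight f s₂ y * pairWeight f s₃ z *
        (χ ((s₁⁻¹ * x)⁻¹ * y) * χ ((s₂⁻¹ * y)⁻¹ * z)) ≤
      B ^ 4 * conv (conv (conv f χ) χ) (check f) (s₁ * s₂ * s₃) := by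
  have hB0 : 0 ≤ B := (hf 1).trans (hB 1)
  have hprod : ∀ a b c d : H, f a * f b * (f c * f d) ≤ B ^ 4 := fun a b c d =>
    calc f a * f b * (f c * f d) ≤ B * B * (B * B) := by
          gcongr <;> first | exact hB _ | exact hf _ | exact mul_nonneg (hf _) (hf _)
      _ = B ^ 4 := by ring
  rw [conv_conv_conv_check_apply, Finset.mul_sum]
  refine Finset.sum_le_sum fun x _ => ?_
  rw [← Equiv.sum_comp (Equiv.mulLeft (s₁⁻¹ * x)), Finset.mul_sum]
  refine Finset.sum_le_sum fun u _ => ?_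
  rw [← Equiv.sum_comp (Equiv.mulLeft (s₂⁻¹ * (s₁⁻¹ * x * u))), Finset.mul_sum]
  refine Finset.sum_le_sum fun v _ => ?_
  have hend : s₃⁻¹ * (s₂⁻¹ * (s₁⁻¹ * x * u) * v) = (s₁ * s₂ * s₃)⁻¹ * (x * u * v) := by group
  simp only [pairWeight, Equiv.coe_mulLeft, inv_mul_cancel_left, hend]
  generalize (s₁ * s₂ * s₃)⁻¹ * (x * u * v) = z
  calc _ = f (s₁⁻¹ * x) * f (s₁⁻¹ * x * u) *
        (f (s₂⁻¹ * (s₁⁻¹ * x * u)) * f (s₂⁻¹ * (s₁⁻¹ * x * u) * v)) *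
          (f x * χ u * (χ v * f z)) := by ring
    _ ≤ B ^ 4 * (f x * χ u * (χ v * f z)) :=
        mul_le_mul_of_nonneg_right (hprod _ _ _ _)
          (mul_nonneg (mul_nonneg (hf _) (hχ _)) (mul_nonneg (hχ _) (hf _)))

-- The three factors range over pairs `(x, s₁⁻¹x)`, `(y, s₂⁻¹y)`, `(z, s₃⁻¹z)`. With `u`, `v` the
-- steps `s₁⁻¹x → y`, `s₂⁻¹y → z` between them, `1 ≤ χ u χ v + (1 - χ u) + (1 - χ v)`; the first
-- term gives a representation of `s₁s₂s₃` as `x u v (s₃⁻¹z)⁻¹`.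
lemma conv_check_mul_mul_le (hf : IsProb f) (hB : ∀ x, f x ≤ B) (hχ0 : ∀ u, 0 ≤ χ u)
    (hχ1 : ∀ u, χ u ≤ 1) (s₁ s₂ s₃ : H) :
    conv f (check f) s₁ * conv f (check f) s₂ * conv f (check f) s₃ ≤
      B ^ 4 * conv (conv (conv f χ) χ) (check f) (s₁ * s₂ * s₃) +
        2 * (B ^ 3 * ∑ u, conv (check f) f u * (1 - χ u)) := by
  have hr0 := (hf.conv hf.check).1
  have hrB := conv_check_le_of_le hf hB
  have hoff0 : 0 ≤ B ^ 2 * ∑ u, conv (check f) f u * (1 - χ u) :=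
    mul_nonneg (sq_nonneg B) (Finset.sum_nonneg fun u _ =>
      mul_nonneg ((hf.check.conv hf).1 u) (sub_nonneg.2 (hχ1 u)))
  have hpair := sum_pairWeight_mul_pairWeight_le hf.1 hB fun u => sub_nonneg.2 (hχ1 u)
  have hleft : _ * _ ≤ _ * _ := mul_le_mul (hpair s₁ s₂) (hrB s₃) (hr0 s₃) hoff0
  have hright : _ * _ ≤ _ * _ := mul_le_mul_of_nonneg (hrB s₁) (hpair s₂ s₃) (hr0 s₁) hoff0
  have hgood := sum_pairWeight_mul_pairWeight_mul_pairWeight_le hf.1 hB hχ0 s₁ s₂ s₃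
  have hcover : ∑ x, ∑ y, ∑ z, pairWeight f s₁ x * pairWeight f s₂ y * pairWeight f s₃ z ≤
      ∑ x, ∑ y, ∑ z, (pairWeight f s₁ x * pairWeight f s₂ y * pairWeight f s₃ z *
          (χ ((s₁⁻¹ * x)⁻¹ * y) * χ ((s₂⁻¹ * y)⁻¹ * z)) +
        pairWeight f s₁ x * pairWeight f s₂ y * (1 - χ ((s₁⁻¹ * x)⁻¹ * y)) * pairWeight f s₃ z +
        pairWeight f s₁ x *
          (pairWeight f s₂ y * pairWeight f s₃ z * (1 - χ ((s₂⁻¹ * y)⁻¹ * z)))) := by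
    refine Finset.sum_le_sum fun x _ => Finset.sum_le_sum fun y _ => Finset.sum_le_sum fun z _ => ?_
    have hp := pairWeight_nonneg hf.1
    have := mul_nonneg (mul_nonneg (mul_nonneg (hp s₁ x) (hp s₂ y)) (hp s₃ z)) (mul_nonneg
      (sub_nonneg.2 (hχ1 ((s₁⁻¹ * x)⁻¹ * y))) (sub_nonneg.2 (hχ1 ((s₂⁻¹ * y)⁻¹ * z))))
    linarith
  simp only [Finset.sum_add_distrib, ← Finset.mul_sum, ← Finset.sum_mul, sum_pairWeight] at hcover
  linarith

lemma card_pow_three_mul_le [DecidableEq H] (hf : IsProb f) (hB : ∀ x, f x ≤ B) (hθ : 0 ≤ θ)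
    {X S : Finset H} (hS : ∀ s ∈ S, θ ≤ conv f (check f) s)
    (hX : 4 * (B ^ 3 * ∑ u ∈ Xᶜ, conv (check f) f u) ≤ θ ^ 3) :
    ((S ^ 3).card : ℝ) * θ ^ 3 ≤ 2 * B ^ 4 * X.card ^ 2 := by
  set χ : H → ℝ := fun u => if u ∈ X then 1 else 0
  have hχ0 : ∀ u, 0 ≤ χ u := fun u => by positivity
  have hχ1 : ∀ u, χ u ≤ 1 := fun u => by simp only [χ]; split_ifs <;> norm_num
  have hχsum : ∑ u, χ u = X.card := by simp [χ]
  have hoff : ∑ u, conv (check f) f u * (1 - χ u) = ∑ u ∈ Xᶜ, conv (check f) f u := by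
    rw [← Finset.sum_subset Xᶜ.subset_univ fun u _ hu => by simp_all [χ]]
    exact Finset.sum_congr rfl fun u hu => by simp_all [χ]
  have hrep : ∀ g ∈ S ^ 3, θ ^ 3 / 2 ≤ B ^ 4 * conv (conv (conv f χ) χ) (check f) g := by
    intro g hg
    rw [pow_succ, sq] at hg
    obtain ⟨_, hab, c, hc, rfl⟩ := Finset.mem_mul.1 hg
    obtain ⟨a, ha, b, hb, rfl⟩ := Finset.mem_mul.1 hab
    have hle := conv_check_mul_mul_le hf hB hχ0 hχ1 a b c
    have hθ3 : θ * θ * θ ≤ conv f (check f) a * conv f (check f) b * conv f (check f) c :=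
      mul_le_mul_of_nonneg (mul_le_mul_of_nonneg (hS a ha) (hS b hb) hθ ((hf.conv hf.check).1 b))
        (hS c hc) (mul_nonneg hθ hθ) ((hf.conv hf.check).1 c)
    rw [hoff] at hle
    linarith
  have hcount : (S ^ 3).card * (θ ^ 3 / 2) ≤ B ^ 4 * X.card ^ 2 :=
    calc (S ^ 3).card * (θ ^ 3 / 2)
        ≤ ∑ g ∈ S ^ 3, B ^ 4 * conv (conv (conv f χ) χ) (check f) g := by
          rw [← nsmul_eq_mul]
          exact Finset.card_nsmul_le_sum _ _ _ hrep
      _ ≤ ∑ g, B ^ 4 * conv (conv (conv f χ) χ) (check f) g :=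
          Finset.sum_le_univ_sum_of_nonneg fun g => mul_nonneg (by positivity)
            (conv_nonneg (conv_nonneg (conv_nonneg hf.1 hχ0) hχ0) hf.check.1 g)
      _ = B ^ 4 * X.card ^ 2 := by
          rw [← Finset.mul_sum, sum_conv, sum_conv, sum_conv, hf.2, hf.check.2, hχsum]
          ring
  linarith

end Weight

section Bridge

variable {w : H → ℝ}

/-- The law of the midpoint of a two-step `w`-walk from `1` conditioned to end at `t`
(it is `0` when `t` cannot be reached in two steps). -/
noncomputable def bridge (w : H → ℝ) (t x : H) : ℝ := w x * w (x⁻¹ * t) / conv w w t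

lemma conv_mul_bridge (hw : ∀ x, 0 ≤ w x) (t x : H) :
    conv w w t * bridge w t x = w x * w (x⁻¹ * t) := by
  refine mul_div_cancel_of_imp' fun h => ?_
  exact (Finset.sum_eq_zero_iff_of_nonneg fun _ _ => mul_nonneg (hw _) (hw _)).1 h x
    (Finset.mem_univ x)

lemma bridge_nonneg (hw : ∀ x, 0 ≤ w x) (t x : H) : 0 ≤ bridge w t x :=
  div_nonneg (mul_nonneg (hw _) (hw _)) (conv_nonneg hw hw t)

lemma isProb_bridge (hw : ∀ x, 0 ≤ w x) {t : H} (ht : conv w w t ≠ 0) : IsProb (bridge w t) :=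
  ⟨bridge_nonneg hw t, by simp only [bridge, ← Finset.sum_div]; exact div_self ht⟩

lemma bridge_le (hw : ∀ x, 0 ≤ w x) {P K : ℝ} (hP : ∀ x, w x ≤ P) (hK : 0 ≤ K) {t : H}
    (ht : P ≤ K * conv w w t) (x : H) : bridge w t x ≤ K * w x := by
  rcases (conv_nonneg hw hw t).eq_or_lt with h | h
  · rw [bridge, ← h, div_zero]
    exact mul_nonneg hK (hw x)
  · rw [bridge, div_le_iff₀ h, mul_right_comm, mul_comm (w x)]
    exact mul_le_mul_of_nonneg_right ((hP _).trans ht) (hw x)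

lemma sum_sq_conv_mul_conv_check_bridge (hw : ∀ x, 0 ≤ w x) (hs : check w = w) (u : H) :
    ∑ t, conv w w t ^ 2 * conv (check (bridge w t)) (bridge w t) u = conv w w u ^ 2 := by
  have hsymm : ∀ x, w x⁻¹ = w x := congrFun hs
  have hmid : ∀ y, ∑ t, w (y⁻¹ * t) * w ((y * u)⁻¹ * t) = conv w w u := fun y => by
    rw [conv, ← Equiv.sum_comp (Equiv.mulLeft y)]
    refine Finset.sum_congr rfl fun s _ => ?_
    rw [← hsymm ((y * u)⁻¹ * _)]
    simp [mul_assoc]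
  calc ∑ t, conv w w t ^ 2 * conv (check (bridge w t)) (bridge w t) u
      = ∑ t, ∑ y, w y * w (y * u) * (w (y⁻¹ * t) * w ((y * u)⁻¹ * t)) := by
        refine Finset.sum_congr rfl fun t _ => ?_
        rw [conv_check_left_apply, Finset.mul_sum]
        refine Finset.sum_congr rfl fun y _ => ?_
        rw [sq, mul_mul_mul_comm, conv_mul_bridge hw, conv_mul_bridge hw]
        ring
    _ = ∑ y, w y * w (y * u) * conv w w u := by
        rw [Finset.sum_comm]
        simp only [← Finset.mul_sum, hmid]
    _ = conv w w u ^ 2 := by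
        rw [← Finset.sum_mul, ← conv_check_left_apply, hs, sq]

lemma sum_sq_conv_mul_sum_compl_superlevel_le [DecidableEq H] (hw : IsProb w) (hs : check w = w)
    {η : ℝ} (hη : 0 ≤ η) :
    ∑ t, conv w w t ^ 2 *
      ∑ u ∈ (superlevel (conv w w) η)ᶜ, conv (check (bridge w t)) (bridge w t) u ≤ η := by
  simp only [Finset.mul_sum]
  rw [Finset.sum_comm]
  simp only [sum_sq_conv_mul_conv_check_bridge hw.1 hs]
  exact (hw.conv hw).sum_sq_compl_superlevel_le hη

-- Average over `t` with weights `conv w w t ^ 2`.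
lemma exists_bridge [DecidableEq H] (hw : IsProb w) (hs : check w = w) {e ρ : ℝ} (he : 0 < e)
    (hρ : 0 < ρ) (hE : e ≤ ∑ t, conv w w t ^ 2) :
    ∃ t, e / 2 < conv w w t ∧
      ∑ u ∈ (superlevel (conv w w) (e / 16))ᶜ,
        conv (check (bridge w t)) (bridge w t) u < 1 / 2 ∧
      ∑ u ∈ (superlevel (conv w w) (ρ * e / 8))ᶜ,
        conv (check (bridge w t)) (bridge w t) u < ρ := by
  set off : ℝ → H → ℝ := fun η t =>
    ∑ u ∈ (superlevel (conv w w) η)ᶜ, conv (check (bridge w t)) (bridge w t) u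
  have hoff0 : ∀ η t, 0 ≤ off η t := fun η t => Finset.sum_nonneg fun u _ =>
    conv_nonneg (fun _ => bridge_nonneg hw.1 t _) (bridge_nonneg hw.1 t) u
  have hq := hw.conv hw
  have hoff₀ : ∑ t, conv w w t ^ 2 * off (e / 16) t ≤ e / 16 :=
    sum_sq_conv_mul_sum_compl_superlevel_le hw hs (by positivity)
  have hoff : ∑ t, conv w w t ^ 2 * off (ρ * e / 8) t ≤ ρ * e / 8 :=
    sum_sq_conv_mul_sum_compl_superlevel_le hw hs (by positivity)
  have hlt : ∑ t, (e / 2 * conv w w t + 2 * (conv w w t ^ 2 * off (e / 16) t) +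
      ρ⁻¹ * (conv w w t ^ 2 * off (ρ * e / 8) t)) < ∑ t, conv w w t ^ 2 := by
    simp only [Finset.sum_add_distrib, ← Finset.mul_sum, hq.2]
    have : ρ⁻¹ * ∑ t, conv w w t ^ 2 * off (ρ * e / 8) t ≤ e / 8 := by
      rw [inv_mul_le_iff₀ hρ, ← mul_div_assoc]
      exact hoff
    linarith
  obtain ⟨t, -, ht⟩ := Finset.exists_lt_of_sum_lt hlt
  have hqt : 0 < conv w w t := by
    refine (hq.1 t).lt_of_ne fun h => ?_
    simp [← h] at ht
  have ht' : e / 2 + 2 * (conv w w t * off (e / 16) t) +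
      ρ⁻¹ * (conv w w t * off (ρ * e / 8) t) < conv w w t :=
    lt_of_mul_lt_mul_left (by linarith) hqt.le
  have h₀ : 0 ≤ conv w w t * off (e / 16) t := mul_nonneg hqt.le (hoff0 _ t)
  have h₁ : 0 ≤ ρ⁻¹ * (conv w w t * off (ρ * e / 8) t) :=
    mul_nonneg (inv_nonneg.2 hρ.le) (mul_nonneg hqt.le (hoff0 _ t))
  refine ⟨t, by linarith, ?_, ?_⟩
  · exact lt_of_mul_lt_mul_left (by linarith) hqt.le
  · refine lt_of_mul_lt_mul_left ?_ hqt.le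
    rw [mul_comm _ ρ, ← inv_mul_lt_iff₀ hρ]
    linarith

end Bridge

section Dominated

variable {f w : H → ℝ} {K P : ℝ}

lemma conv_check_le_of_le_mul {c : ℝ} (hf : ∀ x, 0 ≤ f x) (hs : check w = w)
    (hfw : ∀ x, f x ≤ c * w x) (s : H) : conv f (check f) s ≤ c ^ 2 * conv w w s := by
  rw [conv, conv, Finset.mul_sum]
  refine Finset.sum_le_sum fun x _ => ?_
  calc f x * check f (x⁻¹ * s) ≤ c * w x * (c * check w (x⁻¹ * s)) :=
        mul_le_mul (hfw x) (hfw _) (hf _) ((hf x).trans (hfw x))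
    _ = c ^ 2 * (w x * w (x⁻¹ * s)) := by rw [hs]; ring

lemma one_le_mul_sum_superlevel_conv_check [DecidableEq H] (hw : IsProb w) (hs : check w = w)
    (hP0 : 0 < P) (hP : ∀ x, w x ≤ P) (hK : 0 < K) (hf : IsProb f)
    (hfw : ∀ x, f x ≤ 2 * K * w x)
    (hoff : ∑ u ∈ (superlevel (conv w w) (P / K / 16))ᶜ, conv (check f) f u ≤ 1 / 2) :
    1 ≤ 2 ^ 10 * K ^ 4 *
      ∑ s ∈ superlevel (conv f (check f)) (P / (2 ^ 7 * K)), conv w w s := by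
  have hfB : ∀ x, f x ≤ 2 * K * P := fun x => (hfw x).trans (by gcongr; exact hP x)
  have hcard : 8 * ((superlevel (conv w w) (P / K / 16)).card * (P / (2 ^ 7 * K))) ≤ 1 :=
    calc _ = (superlevel (conv w w) (P / K / 16)).card * (P / K / 16) := by field_simp; ring
      _ ≤ 1 := ((hw.conv hw).card_superlevel_mul_lt_one _).le
  have hmass := le_mul_sum_superlevel_conv_check hf hfB hoff (by positivity) hcard
  rw [div_le_iff₀ (by positivity)] at hmass
  set S := superlevel (conv f (check f)) (P / (2 ^ 7 * K))
  have hle : ∑ s ∈ S, conv f (check f) s ≤ (2 * K) ^ 2 * ∑ s ∈ S, conv w w s := by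
    rw [Finset.mul_sum]
    exact Finset.sum_le_sum fun s _ => conv_check_le_of_le_mul hf.1 hs hfw s
  refine le_of_mul_le_mul_left ?_ hP0
  calc P * 1 = P := mul_one P
    _ ≤ 2 * K * P * (∑ s ∈ S, conv f (check f) s) * (2 ^ 7 * K) := hmass
    _ ≤ 2 * K * P * ((2 * K) ^ 2 * ∑ s ∈ S, conv w w s) * (2 ^ 7 * K) := by gcongr
    _ = P * (2 ^ 10 * K ^ 4 * ∑ s ∈ S, conv w w s) := by ring

-- `ρ = (2²⁶ K⁶)⁻¹` solves `4 B³ ρ = θ³` for `B = 2KP` and `θ = P / (2⁷ K)`.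
lemma card_pow_three_superlevel_mul_le [DecidableEq H] (hw : IsProb w) (hP0 : 0 < P)
    (hP : ∀ x, w x ≤ P) (hK : 0 < K) (hf : IsProb f) (hfw : ∀ x, f x ≤ 2 * K * w x)
    (hoff : ∑ u ∈ (superlevel (conv w w) ((2 ^ 26 * K ^ 6)⁻¹ * (P / K) / 8))ᶜ,
      conv (check f) f u ≤ (2 ^ 26 * K ^ 6)⁻¹) :
    ((superlevel (conv f (check f)) (P / (2 ^ 7 * K)) ^ 3).card : ℝ) * P ≤ 2 ^ 84 * K ^ 21 := by
  set X := superlevel (conv w w) ((2 ^ 26 * K ^ 6)⁻¹ * (P / K) / 8)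
  have hfB : ∀ x, f x ≤ 2 * K * P := fun x => (hfw x).trans (by gcongr; exact hP x)
  have hX : (X.card : ℝ) ≤ 2 ^ 29 * K ^ 7 / P := by
    refine le_of_mul_le_mul_right (((hw.conv hw).card_superlevel_mul_lt_one _).le.trans_eq ?_)
      (show 0 < (2 ^ 26 * K ^ 6)⁻¹ * (P / K) / 8 by positivity)
    field_simp
    norm_num
  have hcard := card_pow_three_mul_le hf hfB (θ := P / (2 ^ 7 * K)) (by positivity) (X := X)
    (fun s hs => (mem_superlevel.1 hs).le) (by
      calc _ ≤ 4 * ((2 * K * P) ^ 3 * (2 ^ 26 * K ^ 6)⁻¹) := by gcongr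
        _ = (P / (2 ^ 7 * K)) ^ 3 := by field_simp; norm_num)
  refine le_of_mul_le_mul_right ?_ (show 0 < P ^ 2 / (2 ^ 7 * K) ^ 3 by positivity)
  calc _ = ((superlevel (conv f (check f)) (P / (2 ^ 7 * K)) ^ 3).card : ℝ) *
        (P / (2 ^ 7 * K)) ^ 3 := by rw [div_pow]; ring
    _ ≤ 2 * (2 * K * P) ^ 4 * X.card ^ 2 := hcard
    _ ≤ 2 * (2 * K * P) ^ 4 * (2 ^ 29 * K ^ 7 / P) ^ 2 := by gcongr
    _ = _ := by field_simp

end Dominated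

lemma exists_small_tripling [DecidableEq H] {w : H → ℝ} (hw : IsProb w) (hs : check w = w)
    {P K : ℝ} (hP0 : 0 < P) (hP : ∀ x, w x ≤ P) (hK : 0 < K) (hE : P / K ≤ ∑ t, conv w w t ^ 2) :
    ∃ S : Finset H, (∀ a ∈ S, a⁻¹ ∈ S) ∧ 1 ≤ 2 ^ 10 * K ^ 4 * ∑ s ∈ S, conv w w s ∧
      ((S ^ 3).card : ℝ) * P ≤ 2 ^ 84 * K ^ 21 ∧ (S.card : ℝ) * P ≤ 2 ^ 7 * K := by
  obtain ⟨t, ht, hoff₀, hoff⟩ :=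
    exists_bridge hw hs (ρ := (2 ^ 26 * K ^ 6)⁻¹) (by positivity) (by positivity) hE
  have hPt : P ≤ 2 * K * conv w w t := by
    rw [div_div, div_lt_iff₀ (by positivity)] at ht
    linarith
  have hf : IsProb (bridge w t) := isProb_bridge hw.1 (ht.trans' (by positivity)).ne'
  have hfw : ∀ x, bridge w t x ≤ 2 * K * w x := bridge_le hw.1 hP (by positivity) hPt
  refine ⟨superlevel (conv (bridge w t) (check (bridge w t))) (P / (2 ^ 7 * K)),
    fun a => inv_mem_superlevel (by rw [check_conv, check_check]),
    one_le_mul_sum_superlevel_conv_check hw hs hP0 hP hK hf hfw hoff₀.le,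
    card_pow_three_superlevel_mul_le hw hP0 hP hK hf hfw hoff.le, ?_⟩
  have hcard := (hf.conv hf.check).card_superlevel_mul_lt_one (P / (2 ^ 7 * K))
  rw [← mul_div_assoc, div_lt_one (by positivity)] at hcard
  exact hcard.le

end SmallTripling

lemma norm_pow_le_norm_pow_of_isSelfAdjoint {A : Type*} [NormedRing A] [StarRing A] [CStarRing A]
    {a : A} (ha : IsSelfAdjoint a) {n : ℕ} (hn : n ≠ 0) : ‖a‖ ^ n ≤ ‖a ^ n‖ := by
  rcases (norm_nonneg a).eq_or_lt with h0 | h0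
  · rw [← h0, zero_pow hn]
    exact norm_nonneg _
  have hlt : n < 2 ^ n := Nat.lt_two_pow_self
  refine le_of_mul_le_mul_right ?_ (pow_pos h0 (2 ^ n - n))
  calc ‖a‖ ^ n * ‖a‖ ^ (2 ^ n - n) = ‖a ^ 2 ^ n‖ := by
        rw [← pow_add, Nat.add_sub_cancel' hlt.le, ha.norm_pow_two_pow]
    _ = ‖a ^ n * a ^ (2 ^ n - n)‖ := by rw [← pow_add, Nat.add_sub_cancel' hlt.le]
    _ ≤ ‖a ^ n‖ * ‖a ^ (2 ^ n - n)‖ := norm_mul_le _ _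
    _ ≤ ‖a ^ n‖ * ‖a‖ ^ (2 ^ n - n) := by
        gcongr
        exact norm_pow_le' a (Nat.sub_pos_of_lt hlt)

lemma exists_le_mul_succ {R : Type*} [Semiring R] [LinearOrder R] [IsOrderedRing R] {a : ℕ → R}
    {K : R} {J : ℕ} (hK : 0 ≤ K) (h : a 0 < K ^ J * a J) : ∃ j < J, a j < K * a (j + 1) := by
  by_contra! hcon
  have hmono : ∀ j ≤ J, K ^ j * a j ≤ a 0 := by
    intro j
    induction j with
    | zero => simp
    | succ j ih =>
      intro hj
      calc K ^ (j + 1) * a (j + 1) = K ^ j * (K * a (j + 1)) := by rw [pow_succ, mul_assoc]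
        _ ≤ K ^ j * a j := mul_le_mul_of_nonneg_left (hcon j hj) (pow_nonneg hK j)
        _ ≤ a 0 := ih (Nat.le_of_succ_le hj)
  exact (hmono J le_rfl).not_gt h

section Representation

open InnerProductSpace

variable {H : Type*} [Group H] {W : Type*} [NormedAddCommGroup W] [InnerProductSpace ℂ W]
  {π : H →* (W →L[ℂ] W)}

/-- The representation `π` acts by isometries, i.e. it is unitary. -/
def IsUnitaryRep (π : H →* (W →L[ℂ] W)) : Prop := ∀ g v, ‖π g v‖ = ‖v‖

/-- The only `π`-invariant subspaces are `0` and the whole space (which may itself be `0`). -/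
def IsIrreducibleRep (π : H →* (W →L[ℂ] W)) : Prop :=
  ∀ U : Submodule ℂ W, (∀ g, ∀ u ∈ U, π g u ∈ U) → U = ⊥ ∨ U = ⊤

lemma IsUnitaryRep.inner_map_map (hπ : IsUnitaryRep π) (g : H) (v w : W) :
    ⟪π g v, π g w⟫_ℂ = ⟪v, w⟫_ℂ :=
  (LinearMap.norm_map_iff_inner_map_map (π g)).1 (hπ g) v w

lemma IsUnitaryRep.inner_map_left (hπ : IsUnitaryRep π) (g : H) (v w : W) :
    ⟪π g v, w⟫_ℂ = ⟪v, π g⁻¹ w⟫_ℂ := by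
  have hw : π g (π g⁻¹ w) = w := by rw [← mul_apply_eq_comp, ← map_mul]; simp
  rw [← hπ.inner_map_map g v, hw]

lemma IsUnitaryRep.norm_le_one (hπ : IsUnitaryRep π) (g : H) : ‖π g‖ ≤ 1 :=
  ContinuousLinearMap.opNorm_le_bound _ zero_le_one fun v => by rw [hπ, one_mul]

lemma IsUnitaryRep.norm_map_mul_sub_le (hπ : IsUnitaryRep π) (g h : H) (v : W) :
    ‖π (g * h) v - v‖ ≤ ‖π g v - v‖ + ‖π h v - v‖ :=
  calc ‖π (g * h) v - v‖ = ‖(π g v - v) + π g (π h v - v)‖ := by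
        rw [map_mul, mul_apply_eq_comp, map_sub]; abel_nf
    _ ≤ ‖π g v - v‖ + ‖π g (π h v - v)‖ := norm_add_le _ _
    _ = ‖π g v - v‖ + ‖π h v - v‖ := by rw [hπ]

lemma IsIrreducibleRep.exists_eq_smul_of_comm [FiniteDimensional ℂ W] [Nontrivial W]
    (hirr : IsIrreducibleRep π) {R : W →ₗ[ℂ] W} (hR : ∀ g x, R (π g x) = π g (R x)) :
    ∃ c : ℂ, ∀ x, R x = c • x := by
  obtain ⟨c, hc⟩ := Module.End.exists_eigenvalue R
  have htop : Module.End.eigenspace R c = ⊤ := by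
    refine (hirr _ fun g u hu => ?_).resolve_left hc
    rw [Module.End.mem_eigenspace_iff] at hu ⊢
    rw [hR, hu, map_smul]
  exact ⟨c, fun x => Module.End.mem_eigenspace_iff.1 (htop ▸ Submodule.mem_top)⟩

variable [Fintype H]

/-- The operator `π(f) = ∑ g, f(g) π(g)`. -/
noncomputable def repOp (π : H →* (W →L[ℂ] W)) (f : H → ℝ) : W →L[ℂ] W :=
  ∑ g, (f g : ℂ) • π g

lemma repOp_add (π : H →* (W →L[ℂ] W)) (f₁ f₂ : H → ℝ) :
    repOp π (f₁ + f₂) = repOp π f₁ + repOp π f₂ := by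
  simp [repOp, add_smul, Finset.sum_add_distrib]

lemma repOp_conv (π : H →* (W →L[ℂ] W)) (μ ν : H → ℝ) :
    repOp π (conv μ ν) = repOp π μ * repOp π ν := by
  simp only [repOp, Complex.coe_smul, sum_conv_smul, Finset.sum_mul_sum, map_mul,
    smul_mul_smul_comm]

lemma repOp_itconv [DecidableEq H] (π : H →* (W →L[ℂ] W)) (μ : H → ℝ) (n : ℕ) :
    repOp π (itconv μ n) = repOp π μ ^ n := by
  induction n with
  | zero => simp [repOp, itconv, dirac]
  | succ n ih => rw [itconv, repOp_conv, ih, pow_succ]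

lemma inner_repOp (π : H →* (W →L[ℂ] W)) (f : H → ℝ) (v w : W) :
    ⟪w, repOp π f v⟫_ℂ = ∑ g, (f g : ℂ) * ⟪w, π g v⟫_ℂ := by
  simp [repOp]

lemma norm_repOp_apply_pow_four_le (π : H →* (W →L[ℂ] W)) (f : H → ℝ) (v : W) :
    ‖repOp π f v‖ ^ 4 ≤ (∑ g, f g ^ 2) * ∑ g, ‖⟪π g v, repOp π f v⟫_ℂ‖ ^ 2 := by
  set u := repOp π f v with hu
  have hsq : ‖u‖ ^ 2 ≤ ∑ g, |f g| * ‖⟪π g v, u⟫_ℂ‖ := by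
    calc ‖u‖ ^ 2 = ‖⟪u, u⟫_ℂ‖ := by rw [inner_self_eq_norm_sq_to_K]; simp
      _ = ‖∑ g, (f g : ℂ) * ⟪u, π g v⟫_ℂ‖ := by rw [← inner_repOp, ← hu]
      _ ≤ ∑ g, ‖(f g : ℂ) * ⟪u, π g v⟫_ℂ‖ := norm_sum_le _ _
      _ = ∑ g, |f g| * ‖⟪π g v, u⟫_ℂ‖ := by
          simp only [norm_mul, Complex.norm_real, Real.norm_eq_abs, norm_inner_symm u]
  calc ‖u‖ ^ 4 = (‖u‖ ^ 2) ^ 2 := by ring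
    _ ≤ (∑ g, |f g| * ‖⟪π g v, u⟫_ℂ‖) ^ 2 := by gcongr
    _ ≤ (∑ g, |f g| ^ 2) * ∑ g, ‖⟪π g v, u⟫_ℂ‖ ^ 2 := Finset.sum_mul_sq_le_sq_mul_sq _ _ _
    _ = _ := by simp only [sq_abs]

lemma IsUnitaryRep.norm_repOp_le (hπ : IsUnitaryRep π) {f : H → ℝ} (hf : ∀ g, 0 ≤ f g) :
    ‖repOp π f‖ ≤ ∑ g, f g := by
  refine (norm_sum_le _ _).trans (Finset.sum_le_sum fun g _ => ?_)
  rw [norm_smul, Complex.norm_real, Real.norm_of_nonneg (hf g)]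
  exact mul_le_of_le_one_right (hf g) (hπ.norm_le_one g)

lemma IsUnitaryRep.norm_repOp_le_one (hπ : IsUnitaryRep π) {μ : H → ℝ} (hμ : IsProb μ) :
    ‖repOp π μ‖ ≤ 1 :=
  (hπ.norm_repOp_le hμ.1).trans_eq hμ.2

lemma IsUnitaryRep.inner_repOp_left (hπ : IsUnitaryRep π) {f : H → ℝ} (hf : check f = f)
    (v w : W) : ⟪repOp π f v, w⟫_ℂ = ⟪v, repOp π f w⟫_ℂ := by
  have hsymm : ∀ g, f g⁻¹ = f g := congrFun hf
  rw [← inner_conj_symm, inner_repOp, inner_repOp, map_sum, ← Equiv.sum_comp (Equiv.inv H)]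
  refine Finset.sum_congr rfl fun g _ => ?_
  simp [hsymm, hπ.inner_map_left]

lemma IsUnitaryRep.norm_repOp_pow_le [DecidableEq H] [CompleteSpace W] (hπ : IsUnitaryRep π)
    {μ : H → ℝ} (hμ : check μ = μ) {n : ℕ} (hn : n ≠ 0) :
    ‖repOp π μ‖ ^ n ≤ ‖repOp π (itconv μ n)‖ := by
  have hself : IsSelfAdjoint (repOp π μ) :=
    ContinuousLinearMap.isSelfAdjoint_iff_isSymmetric.2 fun v w => hπ.inner_repOp_left hμ v w
  rw [repOp_itconv]
  exact norm_pow_le_norm_pow_of_isSelfAdjoint hself hn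

section Schur

variable [FiniteDimensional ℂ W]

lemma exists_sum_sq_norm_inner_eq [Nontrivial W] (hπ : IsUnitaryRep π)
    (hirr : IsIrreducibleRep π) (w : W) :
    ∃ c : ℝ, ∀ x, ∑ g, ‖⟪π g w, x⟫_ℂ‖ ^ 2 = c * ‖x‖ ^ 2 := by
  let R : W →ₗ[ℂ] W := ∑ g, (rankOne ℂ (π g w) (π g w) : W →L[ℂ] W).toLinearMap
  have hR : ∀ x, R x = ∑ g, ⟪π g w, x⟫_ℂ • π g w := fun x => by simp [R]
  have hcomm : ∀ h x, R (π h x) = π h (R x) := fun h x => by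
    rw [hR, hR, map_sum, ← Equiv.sum_comp (Equiv.mulLeft h)]
    refine Finset.sum_congr rfl fun g _ => ?_
    simp [map_mul, hπ.inner_map_map]
  obtain ⟨c, hc⟩ := hirr.exists_eq_smul_of_comm hcomm
  refine ⟨c.re, fun x => ?_⟩
  have hscalar : ⟪x, R x⟫_ℂ = c * (‖x‖ ^ 2 : ℝ) := by
    rw [hc, inner_smul_right, inner_self_eq_norm_sq_to_K]; simp
  have hsum : ⟪x, R x⟫_ℂ = ((∑ g, ‖⟪π g w, x⟫_ℂ‖ ^ 2 : ℝ) : ℂ) := by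
    rw [hR, inner_sum]
    push_cast
    refine Finset.sum_congr rfl fun g _ => ?_
    rw [inner_smul_right, ← inner_conj_symm x, Complex.mul_conj']
  have hre := congrArg Complex.re (hsum.symm.trans hscalar)
  rwa [Complex.ofReal_re, Complex.re_mul_ofReal] at hre

lemma finrank_mul_sum_sq_norm_inner [Nontrivial W] (hπ : IsUnitaryRep π)
    (hirr : IsIrreducibleRep π) (v w : W) :
    (Module.finrank ℂ W : ℝ) * ∑ g, ‖⟪π g w, v⟫_ℂ‖ ^ 2 =
      Fintype.card H * ‖w‖ ^ 2 * ‖v‖ ^ 2 := by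
  obtain ⟨c, hc⟩ := exists_sum_sq_norm_inner_eq hπ hirr w
  have htrace : Fintype.card H * ‖w‖ ^ 2 = Module.finrank ℂ W * c := by
    have b := stdOrthonormalBasis ℂ W
    calc Fintype.card H * ‖w‖ ^ 2 = ∑ i, ∑ g, ‖⟪π g w, b i⟫_ℂ‖ ^ 2 := by
          rw [Finset.sum_comm]
          simp [b.sum_sq_norm_inner_left, hπ _ w]
      _ = Module.finrank ℂ W * c := by simp [hc]
  rw [hc, htrace, mul_assoc]

lemma finrank_le_card [Nontrivial W] (hπ : IsUnitaryRep π) (hirr : IsIrreducibleRep π) :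
    (Module.finrank ℂ W : ℝ) ≤ Fintype.card H := by
  obtain ⟨v, hv⟩ := exists_norm_eq W (zero_le_one (α := ℝ))
  have hschur := finrank_mul_sum_sq_norm_inner hπ hirr v v
  rw [hv, one_pow, mul_one, mul_one] at hschur
  have hself : ‖⟪π 1 v, v⟫_ℂ‖ ^ 2 = 1 := by
    rw [map_one, one_apply_eq_self, inner_self_eq_norm_sq_to_K, hv]; simp
  have hone : 1 ≤ ∑ g, ‖⟪π g v, v⟫_ℂ‖ ^ 2 :=
    hself ▸ Finset.single_le_sum (f := fun g => ‖⟪π g v, v⟫_ℂ‖ ^ 2) (fun _ _ => by positivity)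
      (Finset.mem_univ 1)
  exact (le_mul_of_one_le_right (Nat.cast_nonneg _) hone).trans_eq hschur

lemma norm_repOp_sq_le [Nontrivial W] (hπ : IsUnitaryRep π) (hirr : IsIrreducibleRep π)
    (f : H → ℝ) :
    ‖repOp π f‖ ^ 2 ≤ Fintype.card H / Module.finrank ℂ W * ∑ g, f g ^ 2 := by
  have hd : (0 : ℝ) < Module.finrank ℂ W := by exact_mod_cast Module.finrank_pos
  set κ : ℝ := Fintype.card H / Module.finrank ℂ W * ∑ g, f g ^ 2 with hκ
  have hκ0 : 0 ≤ κ := mul_nonneg (by positivity) (Finset.sum_nonneg fun _ _ => sq_nonneg _)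
  refine (Real.le_sqrt (norm_nonneg _) hκ0).1 ?_
  refine ContinuousLinearMap.opNorm_le_bound _ (Real.sqrt_nonneg _) fun v => ?_
  rcases (norm_nonneg (repOp π f v)).eq_or_lt with h0 | h0
  · rw [← h0]; positivity
  rw [← Real.sqrt_sq (norm_nonneg v), ← Real.sqrt_mul hκ0]
  refine Real.le_sqrt_of_sq_le (le_of_mul_le_mul_right ?_ (pow_pos h0 2))
  have hschur : ∑ g, ‖⟪π g v, repOp π f v⟫_ℂ‖ ^ 2 =
      Fintype.card H * ‖v‖ ^ 2 * ‖repOp π f v‖ ^ 2 / Module.finrank ℂ W := by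
    rw [eq_div_iff hd.ne', mul_comm, finrank_mul_sum_sq_norm_inner hπ hirr]
  calc ‖repOp π f v‖ ^ 2 * ‖repOp π f v‖ ^ 2 = ‖repOp π f v‖ ^ 4 := by ring
    _ ≤ (∑ g, f g ^ 2) * ∑ g, ‖⟪π g v, repOp π f v⟫_ℂ‖ ^ 2 := norm_repOp_apply_pow_four_le π f v
    _ = κ * ‖v‖ ^ 2 * ‖repOp π f v‖ ^ 2 := by rw [hschur, hκ]; ring

lemma norm_repOp_sq_le_of_le [Nontrivial W] (hπ : IsUnitaryRep π) (hirr : IsIrreducibleRep π)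
    {w : H → ℝ} (hw : IsProb w) {P : ℝ} (hP : ∀ x, w x ≤ P) :
    ‖repOp π w‖ ^ 2 ≤ Fintype.card H / Module.finrank ℂ W * P := by
  refine (norm_repOp_sq_le hπ hirr w).trans ?_
  rw [← conv_check_apply_one]
  gcongr
  exact hw.conv_le (fun _ => hP _) 1

lemma norm_repOp_le_sum_add_sqrt [DecidableEq H] [Nontrivial W] (hπ : IsUnitaryRep π)
    (hirr : IsIrreducibleRep π) {w : H → ℝ} (hw : ∀ g, 0 ≤ w g) (U : Finset H) :
    ‖repOp π w‖ ≤ ∑ g ∈ U, w g +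
      √(Fintype.card H / Module.finrank ℂ W * ∑ g ∈ Uᶜ, w g ^ 2) := by
  have hU : ‖repOp π ((U : Set H).indicator w)‖ ≤ ∑ g ∈ U, w g := by
    refine (hπ.norm_repOp_le (Set.indicator_nonneg fun g _ => hw g)).trans_eq ?_
    exact Finset.sum_indicator_subset _ U.subset_univ
  have hcompl : ∑ g, (U : Set H)ᶜ.indicator w g ^ 2 = ∑ g ∈ Uᶜ, w g ^ 2 := by
    rw [← Finset.coe_compl, ← Finset.sum_indicator_subset _ Uᶜ.subset_univ]
    refine Finset.sum_congr rfl fun g _ => ?_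
    by_cases hg : g ∈ U <;> simp [hg]
  calc ‖repOp π w‖
      = ‖repOp π ((U : Set H).indicator w) + repOp π ((U : Set H)ᶜ.indicator w)‖ := by
        rw [← repOp_add, Set.indicator_self_add_compl]
    _ ≤ ‖repOp π ((U : Set H).indicator w)‖ + ‖repOp π ((U : Set H)ᶜ.indicator w)‖ :=
        norm_add_le _ _
    _ ≤ _ := add_le_add hU (Real.le_sqrt_of_sq_le ?_)
  rw [← hcompl]
  exact norm_repOp_sq_le hπ hirr _

lemma norm_repOp_le_sum_superlevel_add_sqrt [Nontrivial W] (hπ : IsUnitaryRep π)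
    (hirr : IsIrreducibleRep π) {w : H → ℝ} (hw : IsProb w) {t : ℝ} (ht : 0 ≤ t) :
    ‖repOp π w‖ ≤ ∑ g ∈ superlevel w t, w g +
      √(Fintype.card H / Module.finrank ℂ W * t) := by
  classical
  refine (norm_repOp_le_sum_add_sqrt hπ hirr hw.1 (superlevel w t)).trans ?_
  gcongr
  exact hw.sum_sq_compl_superlevel_le ht

lemma norm_repOp_sq_le_of_sum_superlevel_le [Nontrivial W] (hπ : IsUnitaryRep π)
    (hirr : IsIrreducibleRep π) {w : H → ℝ} (hw : IsProb w) {Y : ℝ} (hY : 4 ≤ Y)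
    (hdim : (Module.finrank ℂ W : ℝ) = Y ^ 3)
    (hmass : ∑ g ∈ superlevel w (Y / Fintype.card H), w g ≤ Y⁻¹) : ‖repOp π w‖ ^ 2 ≤ Y⁻¹ := by
  have hY0 : 0 < Y := by linarith
  have htail : √(Fintype.card H / Y ^ 3 * (Y / Fintype.card H)) = Y⁻¹ := by
    rw [← Real.sqrt_sq (inv_nonneg.2 hY0.le)]
    congr 1
    field_simp
  have hnorm := norm_repOp_le_sum_superlevel_add_sqrt hπ hirr hw (t := Y / Fintype.card H)
    (by positivity)
  rw [hdim, htail] at hnorm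
  calc ‖repOp π w‖ ^ 2 ≤ (Y⁻¹ + Y⁻¹) ^ 2 := by
        gcongr
        exact hnorm.trans (by gcongr)
    _ = 4 * Y⁻¹ * Y⁻¹ := by ring
    _ ≤ 1 * Y⁻¹ := by
        gcongr
        rwa [← div_eq_mul_inv, div_le_one hY0]
    _ = Y⁻¹ := one_mul _

end Schur

end Representation

section Growth

open scoped Pointwise InnerProductSpace

variable {H : Type*} [Group H] [DecidableEq H]

/-- Every symmetric set of `w`-mass at least `E⁻¹` either grows by a factor `E` under tripling or
has at least `M` elements. -/
def ExpandsOrLarge (w : H → ℝ) (E M : ℝ) : Prop :=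
  ∀ A : Finset H, (∀ a ∈ A, a⁻¹ ∈ A) → E⁻¹ ≤ ∑ g ∈ A, w g →
    E * (A.card : ℝ) ≤ ((A ^ 3).card : ℝ) ∨ M ≤ (A.card : ℝ)

variable [Fintype H]

section Flattening

lemma exists_flat_scale {μ : H → ℝ} (hμ : IsProb μ) {K : ℝ} (hK : 0 ≤ K) {J : ℕ}
    (hJ : (Fintype.card H : ℝ) < K ^ J) (l₁ : ℕ) :
    ∃ l, l₁ ≤ l ∧ l ≤ 4 ^ J * l₁ ∧
      ∑ g, itconv μ l g ^ 2 < K * ∑ g, itconv μ (4 * l) g ^ 2 := by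
  have hN : (0 : ℝ) < Fintype.card H := by exact_mod_cast Fintype.card_pos
  obtain ⟨j, hj, hflat⟩ :=
    exists_le_mul_succ (a := fun j => ∑ g, itconv μ (4 ^ j * l₁) g ^ 2) (J := J) hK (by
      calc ∑ g, itconv μ (4 ^ 0 * l₁) g ^ 2 ≤ 1 := (hμ.itconv _).sum_sq_le_one
        _ < K ^ J * (Fintype.card H : ℝ)⁻¹ := by rwa [← div_eq_mul_inv, one_lt_div hN]
        _ ≤ K ^ J * ∑ g, itconv μ (4 ^ J * l₁) g ^ 2 := by
            gcongr
            exact (hμ.itconv _).inv_card_le_sum_sq)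
  refine ⟨4 ^ j * l₁, Nat.le_mul_of_pos_left _ (by positivity),
    Nat.mul_le_mul_right _ (Nat.pow_le_pow_right (by norm_num) hj.le), ?_⟩
  rwa [pow_succ', mul_assoc] at hflat

variable {w : H → ℝ}

lemma ExpandsOrLarge.mul_le_of_flat {P X M : ℝ} (hgrow : ExpandsOrLarge (conv w w) (X ^ 35) M)
    (hw : IsProb w) (hs : check w = w) (hP0 : 0 < P) (hP : ∀ x, w x ≤ P) (hX : 2 ^ 10 ≤ X)
    (hflat : P / X ≤ ∑ t, conv w w t ^ 2) : M * P ≤ 2 ^ 7 * X := by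
  have hX0 : 0 < X := lt_of_lt_of_le (by norm_num) hX
  obtain ⟨S, hSs, hmass, htrip, hcard⟩ := exists_small_tripling hw hs hP0 hP hX0 hflat
  have hmass' : (X ^ 35)⁻¹ ≤ ∑ s ∈ S, conv w w s := by
    rw [inv_le_iff_one_le_mul₀' (by positivity)]
    refine hmass.trans (mul_le_mul_of_nonneg_right ?_
      (Finset.sum_nonneg fun s _ => (hw.conv hw).1 s))
    calc 2 ^ 10 * X ^ 4 ≤ X * X ^ 4 := by gcongr
      _ = X ^ 5 := by ring
      _ ≤ X ^ 35 := pow_le_pow_right₀ (by linarith) (by norm_num)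
  rcases hgrow S hSs hmass' with hexp | hlarge
  · have hsum : ∑ s ∈ S, conv w w s ≤ S.card * P := by
      rw [← nsmul_eq_mul]
      exact Finset.sum_le_card_nsmul _ _ _ fun s _ => hw.conv_le hP s
    have hle : X ^ 35 ≤ 2 ^ 94 * X ^ 25 :=
      calc X ^ 35 = X ^ 35 * 1 := (mul_one _).symm
        _ ≤ X ^ 35 * (2 ^ 10 * X ^ 4 * (S.card * P)) := by
            gcongr
            exact hmass.trans (by gcongr)
        _ = 2 ^ 10 * X ^ 4 * (X ^ 35 * S.card * P) := by ring
        _ ≤ 2 ^ 10 * X ^ 4 * (2 ^ 84 * X ^ 21) := by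
            have hcube := (mul_le_mul_of_nonneg_right hexp hP0.le).trans htrip
            gcongr
        _ = 2 ^ 94 * X ^ 25 := by ring
    have hlt : 2 ^ 94 * X ^ 25 < X ^ 35 :=
      calc 2 ^ 94 * X ^ 25 < (2 ^ 10) ^ 10 * X ^ 25 := by gcongr; norm_num
        _ ≤ X ^ 10 * X ^ 25 := by gcongr
        _ = X ^ 35 := by ring
    exact absurd hle hlt.not_ge
  · exact (mul_le_mul_of_nonneg_right hlarge hP0.le).trans hcard

lemma ExpandsOrLarge.mul_sum_superlevel_le {E M P t : ℝ} (hgrow : ExpandsOrLarge w E M)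
    (hw : IsProb w) (hs : check w = w) (hE : 0 < E) (hP : ∀ x, w x ≤ P) (ht : 0 ≤ t)
    (hMt : 1 ≤ M * t) : E * ∑ g ∈ superlevel w t, w g ≤ Fintype.card H * P := by
  have hsum : ∀ A : Finset H, ∑ g ∈ A, w g ≤ A.card * P := fun A => by
    rw [← nsmul_eq_mul]
    exact Finset.sum_le_card_nsmul _ _ _ fun g _ => hP g
  rcases lt_or_ge (∑ g ∈ superlevel w t, w g) E⁻¹ with hsmall | hmass
  · calc E * ∑ g ∈ superlevel w t, w g ≤ E * E⁻¹ := by gcongr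
      _ = ∑ g, w g := by rw [mul_inv_cancel₀ hE.ne', hw.2]
      _ ≤ Fintype.card H * P := hsum Finset.univ
  rcases hgrow _ (fun a => inv_mem_superlevel hs) hmass with hexp | hlarge
  · have hP0 : 0 ≤ P := (hw.1 1).trans (hP 1)
    have hcube : ((superlevel w t ^ 3).card : ℝ) ≤ Fintype.card H := by
      exact_mod_cast Finset.card_le_univ _
    calc E * ∑ g ∈ superlevel w t, w g ≤ E * ((superlevel w t).card * P) := by
          gcongr
          exact hsum _
      _ = E * (superlevel w t).card * P := (mul_assoc _ _ _).symm
      _ ≤ Fintype.card H * P := by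
          gcongr
          exact hexp.trans hcube
  · exact absurd (hMt.trans (mul_le_mul_of_nonneg_right hlarge ht))
      (hw.card_superlevel_mul_lt_one t).not_ge

end Flattening

section Flat

variable {W : Type*} [NormedAddCommGroup W] [InnerProductSpace ℂ W] [FiniteDimensional ℂ W]
  [Nontrivial W] {π : H →* (W →L[ℂ] W)} {w : H → ℝ}

lemma norm_repOp_sq_le_of_flat (hπ : IsUnitaryRep π) (hirr : IsIrreducibleRep π)
    (hw : IsProb w) (hs : check w = w) {P X Y : ℝ} (hP : ∀ x, w x ≤ P) (hX : 2 ^ 10 ≤ X)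
    (hY : 4 ≤ Y) (hdim : (Module.finrank ℂ W : ℝ) = Y ^ 3)
    (hgrow : ExpandsOrLarge w (X ^ 35) (Y⁻¹ * Fintype.card H))
    (hflat : Y⁻¹ * Fintype.card H * P ≤ 2 ^ 7 * X) : ‖repOp π w‖ ^ 2 ≤ Y⁻¹ := by
  have hX0 : 0 < X := lt_of_lt_of_le (by norm_num) hX
  have : 0 < Y := by linarith
  have hNP : Fintype.card H * P ≤ X ^ 2 * Y :=
    calc Fintype.card H * P = Y⁻¹ * Fintype.card H * P * Y := by field_simp
      _ ≤ 2 ^ 7 * X * Y := by gcongr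
      _ ≤ X * X * Y := by gcongr; linarith
      _ = X ^ 2 * Y := by ring
  rcases le_or_gt (X ^ 2) Y with hXY | hXY
  · calc ‖repOp π w‖ ^ 2 ≤ Fintype.card H / Y ^ 3 * P :=
          hdim ▸ norm_repOp_sq_le_of_le hπ hirr hw hP
      _ = Fintype.card H * P / Y ^ 3 := div_mul_eq_mul_div _ _ _
      _ ≤ Y * Y / Y ^ 3 :=
          div_le_div_of_nonneg_right (hNP.trans (by gcongr)) (by positivity)
      _ = Y⁻¹ := by field_simp
  have hmass : ∑ g ∈ superlevel w (Y / Fintype.card H), w g ≤ Y⁻¹ := by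
    have hgrowth := hgrow.mul_sum_superlevel_le hw hs (by positivity) hP
      (t := Y / Fintype.card H) (by positivity) (by field_simp; rfl)
    refine le_of_mul_le_mul_left (hgrowth.trans (hNP.trans ?_)) (pow_pos hX0 35)
    calc X ^ 2 * Y = X ^ 2 * Y ^ 2 * Y⁻¹ := by field_simp
      _ ≤ X ^ 2 * (X ^ 2) ^ 2 * Y⁻¹ := by gcongr
      _ = X ^ 6 * Y⁻¹ := by ring
      _ ≤ X ^ 35 * Y⁻¹ := by gcongr <;> linarith
  exact norm_repOp_sq_le_of_sum_superlevel_le hπ hirr hw hY hdim hmass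

end Flat

end Growth

section Displacement

open scoped Pointwise InnerProductSpace

variable {H : Type*} [Group H] [Fintype H] {W : Type*} [NormedAddCommGroup W]
  [InnerProductSpace ℂ W] {π : H →* (W →L[ℂ] W)} {v : W}

/-- The approximate stabilizer of `v`: the elements of the group moving `v` by at most `r`. -/
noncomputable def approxStab (π : H →* (W →L[ℂ] W)) (v : W) (r : ℝ) : Finset H :=
  Finset.univ.filter fun g => ‖π g v - v‖ ≤ r

lemma mem_approxStab {r : ℝ} {g : H} : g ∈ approxStab π v r ↔ ‖π g v - v‖ ≤ r := by
  simp [approxStab]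

lemma one_mem_approxStab {r : ℝ} (hr : 0 ≤ r) : 1 ∈ approxStab π v r :=
  mem_approxStab.2 (by simpa using hr)

lemma IsUnitaryRep.inv_mem_approxStab (hπ : IsUnitaryRep π) {r : ℝ} {g : H}
    (hg : g ∈ approxStab π v r) : g⁻¹ ∈ approxStab π v r := by
  rw [mem_approxStab] at hg ⊢
  have hinv : π g (π g⁻¹ v) = v := by rw [← mul_apply_eq_comp, ← map_mul]; simp
  rwa [← hπ g, map_sub, hinv, norm_sub_rev]

lemma exists_card_approxStab_lt (π : H →* (W →L[ℂ] W)) (v : W) {E : ℝ} (hE : 0 ≤ E) {J : ℕ}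
    (hJ : (Fintype.card H : ℝ) < E ^ J) :
    ∃ j < J, ((approxStab π v (3 ^ j)⁻¹).card : ℝ) <
      E * (approxStab π v (3 ^ (j + 1))⁻¹).card := by
  refine exists_le_mul_succ (a := fun j => ((approxStab π v (3 ^ j)⁻¹).card : ℝ)) hE ?_
  have hone : (1 : ℝ) ≤ (approxStab π v (3 ^ J)⁻¹).card := by
    exact Nat.one_le_cast.2 (Finset.card_pos.2 ⟨1, one_mem_approxStab (by positivity)⟩)
  calc ((approxStab π v (3 ^ 0)⁻¹).card : ℝ) ≤ Fintype.card H := by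
        exact_mod_cast Finset.card_le_univ _
    _ < E ^ J := hJ
    _ ≤ E ^ J * (approxStab π v (3 ^ J)⁻¹).card := le_mul_of_one_le_right (by positivity) hone

lemma finrank_mul_card_approxStab_le [FiniteDimensional ℂ W] [Nontrivial W]
    (hπ : IsUnitaryRep π) (hirr : IsIrreducibleRep π)
    (hv : ‖v‖ = 1) {r : ℝ} (hr : r ≤ 1 / 2) :
    (Module.finrank ℂ W : ℝ) * (approxStab π v r).card ≤ 4 * Fintype.card H := by
  have hcoef : ∀ g ∈ approxStab π v r, (1 / 4 : ℝ) ≤ ‖⟪π g v, v⟫_ℂ‖ ^ 2 := fun g hg => by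
    have hself : ‖⟪v, v⟫_ℂ‖ = 1 := by rw [inner_self_eq_norm_sq_to_K, hv]; simp
    have hmove : ‖⟪v - π g v, v⟫_ℂ‖ ≤ 1 / 2 :=
      calc ‖⟪v - π g v, v⟫_ℂ‖ ≤ ‖v - π g v‖ * ‖v‖ := norm_inner_le_norm _ _
        _ ≤ 1 / 2 := by rw [hv, mul_one, norm_sub_rev]; exact (mem_approxStab.1 hg).trans hr
    have htri := norm_sub_norm_le ⟪v, v⟫_ℂ ⟪v - π g v, v⟫_ℂ
    rw [← inner_sub_left, sub_sub_cancel, hself] at htri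
    calc (1 / 4 : ℝ) = (1 / 2) ^ 2 := by norm_num
      _ ≤ ‖⟪π g v, v⟫_ℂ‖ ^ 2 := by gcongr; linarith
  have hcard : (approxStab π v r).card * (1 / 4 : ℝ) ≤ ∑ g, ‖⟪π g v, v⟫_ℂ‖ ^ 2 := by
    rw [← nsmul_eq_mul]
    exact (Finset.card_nsmul_le_sum _ _ _ hcoef).trans
      (Finset.sum_le_univ_sum_of_nonneg fun g => sq_nonneg _)
  have hschur := finrank_mul_sum_sq_norm_inner hπ hirr v v
  rw [hv, one_pow, mul_one, mul_one] at hschur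
  have := hschur ▸ mul_le_mul_of_nonneg_left hcard (Nat.cast_nonneg (Module.finrank ℂ W))
  linarith

variable [DecidableEq H]

lemma IsUnitaryRep.approxStab_pow_three_subset (hπ : IsUnitaryRep π) (v : W) (r : ℝ) :
    approxStab π v r ^ 3 ⊆ approxStab π v (3 * r) := by
  intro x hx
  rw [pow_succ, sq] at hx
  obtain ⟨_, hab, c, hc, rfl⟩ := Finset.mem_mul.1 hx
  obtain ⟨a, ha, b, hb, rfl⟩ := Finset.mem_mul.1 hab
  rw [mem_approxStab] at *
  linarith [hπ.norm_map_mul_sub_le (a * b) c v, hπ.norm_map_mul_sub_le a b v]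

lemma sum_compl_approxStab_mul_sq_le {w : H → ℝ} (hw : ∀ g, 0 ≤ w g) {r : ℝ} (hr : 0 ≤ r) :
    (∑ g ∈ (approxStab π v r)ᶜ, w g) * r ^ 2 ≤ ∑ g, w g * ‖π g v - v‖ ^ 2 := by
  rw [Finset.sum_mul]
  calc ∑ g ∈ (approxStab π v r)ᶜ, w g * r ^ 2
      ≤ ∑ g ∈ (approxStab π v r)ᶜ, w g * ‖π g v - v‖ ^ 2 := by
        refine Finset.sum_le_sum fun g hg => mul_le_mul_of_nonneg_left ?_ (hw g)
        rw [Finset.mem_compl, mem_approxStab, not_le] at hg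
        gcongr
    _ ≤ ∑ g, w g * ‖π g v - v‖ ^ 2 :=
        Finset.sum_le_univ_sum_of_nonneg fun g => mul_nonneg (hw g) (sq_nonneg _)

-- The cube of the stabilizer of radius `3⁻¹r` lies in the one of radius `r`, so along the radii
-- `3⁻ʲ` one of them does not grow; being small by Schur orthogonality, it must have small mass.
lemma ExpandsOrLarge.le_sum_mul_norm_sub_sq [FiniteDimensional ℂ W] [Nontrivial W] {w : H → ℝ}
    {E M : ℝ} (hgrow : ExpandsOrLarge w E M) (hw : IsProb w) (hπ : IsUnitaryRep π)
    (hirr : IsIrreducibleRep π) (hE : 1 ≤ E) {J : ℕ} (hJ : (Fintype.card H : ℝ) < E ^ J)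
    (hM : 4 * Fintype.card H < Module.finrank ℂ W * M) (hv : ‖v‖ = 1) :
    (1 - E⁻¹) / 9 ^ J ≤ ∑ g, w g * ‖π g v - v‖ ^ 2 := by
  obtain ⟨j, hjJ, hj⟩ := exists_card_approxStab_lt π v (zero_le_one.trans hE) hJ
  set r : ℝ := (3 ^ (j + 1))⁻¹ with hr
  have hcube : approxStab π v r ^ 3 ⊆ approxStab π v (3 ^ j)⁻¹ := by
    refine (hπ.approxStab_pow_three_subset v r).trans_eq ?_
    rw [hr, pow_succ, mul_inv_rev, mul_inv_cancel_left₀ three_ne_zero]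
  have hmass : ∑ g ∈ approxStab π v r, w g < E⁻¹ := by
    by_contra! hge
    rcases hgrow _ (fun _ => hπ.inv_mem_approxStab) hge with hexp | hlarge
    · have : ((approxStab π v r ^ 3).card : ℝ) ≤ (approxStab π v (3 ^ j)⁻¹).card := by
        exact_mod_cast Finset.card_le_card hcube
      linarith
    · have hr2 : r ≤ 1 / 2 := by
        rw [hr, pow_succ, mul_inv]
        have : ((3 : ℝ) ^ j)⁻¹ ≤ 1 := inv_le_one_of_one_le₀ (one_le_pow₀ (by norm_num))
        linarith
      have hcard := finrank_mul_card_approxStab_le hπ hirr hv hr2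
      have := mul_le_mul_of_nonneg_left hlarge (Nat.cast_nonneg (α := ℝ) (Module.finrank ℂ W))
      linarith
  have hE' : 0 ≤ 1 - E⁻¹ := sub_nonneg.2 (inv_le_one_of_one_le₀ hE)
  calc (1 - E⁻¹) / 9 ^ J ≤ (1 - E⁻¹) / 9 ^ (j + 1) := by
        gcongr
        · norm_num
        · exact hjJ
    _ = (1 - E⁻¹) * r ^ 2 := by
        rw [hr, inv_pow, ← pow_mul, mul_comm (j + 1), pow_mul, div_eq_mul_inv]; norm_num
    _ ≤ (∑ g ∈ (approxStab π v r)ᶜ, w g) * r ^ 2 := by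
        rw [hw.sum_compl]
        gcongr
    _ ≤ ∑ g, w g * ‖π g v - v‖ ^ 2 := sum_compl_approxStab_mul_sq_le hw.1 (by positivity)

end Displacement

section SpectralGap

open InnerProductSpace

variable {H : Type*} [Group H] [Fintype H] {W : Type*} [NormedAddCommGroup W]
  [InnerProductSpace ℂ W] {π : H →* (W →L[ℂ] W)} {μ : H → ℝ}

lemma IsUnitaryRep.sum_mul_norm_sub_sq (hπ : IsUnitaryRep π) (hμ : IsProb μ) (hs : check μ = μ)
    {v : W} (hv : ‖v‖ = 1) :
    ∑ g, conv μ μ g * ‖π g v - v‖ ^ 2 = 2 - 2 * ‖repOp π μ v‖ ^ 2 := by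
  have hnorm : ‖repOp π μ v‖ ^ 2 = ∑ g, conv μ μ g * RCLike.re ⟪v, π g v⟫_ℂ := by
    rw [← inner_self_eq_norm_sq (𝕜 := ℂ), hπ.inner_repOp_left hs, ← mul_apply_eq_comp,
      ← repOp_conv, inner_repOp, map_sum]
    simp
  have hexpand : ∀ g, ‖π g v - v‖ ^ 2 = 2 - 2 * RCLike.re ⟪v, π g v⟫_ℂ := fun g => by
    rw [norm_sub_rev, norm_sub_sq (𝕜 := ℂ), hπ, hv]; ring
  calc ∑ g, conv μ μ g * ‖π g v - v‖ ^ 2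
      = ∑ g, (conv μ μ g * 2 - 2 * (conv μ μ g * RCLike.re ⟪v, π g v⟫_ℂ)) :=
        Finset.sum_congr rfl fun g _ => by rw [hexpand]; ring
    _ = 2 - 2 * ‖repOp π μ v‖ ^ 2 := by
        rw [Finset.sum_sub_distrib, ← Finset.sum_mul, ← Finset.mul_sum, (hμ.conv hμ).2, hnorm,
          one_mul]

lemma IsUnitaryRep.norm_repOp_sq_le_of_displacement [Nontrivial W] (hπ : IsUnitaryRep π)
    (hμ : IsProb μ) (hs : check μ = μ) {c : ℝ}
    (hc : ∀ v : W, ‖v‖ = 1 → c ≤ ∑ g, conv μ μ g * ‖π g v - v‖ ^ 2) :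
    ‖repOp π μ‖ ^ 2 ≤ 1 - c / 2 := by
  have hunit : ∀ v : W, ‖v‖ = 1 → ‖repOp π μ v‖ ^ 2 ≤ 1 - c / 2 := fun v hv => by
    have := hc v hv
    rw [hπ.sum_mul_norm_sub_sq hμ hs hv] at this
    linarith
  obtain ⟨v₀, hv₀⟩ := exists_norm_eq W (zero_le_one (α := ℝ))
  have hnonneg : 0 ≤ 1 - c / 2 := (sq_nonneg _).trans (hunit v₀ hv₀)
  exact (Real.le_sqrt (norm_nonneg _) hnonneg).1 <|
    ContinuousLinearMap.opNorm_le_of_unit_norm (Real.sqrt_nonneg _) fun v hv =>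
      Real.le_sqrt_of_sq_le (hunit v hv)

variable [DecidableEq H] [FiniteDimensional ℂ W] [Nontrivial W]

lemma norm_repOp_pow_le_of_expandsOrLarge (hπ : IsUnitaryRep π) (hirr : IsIrreducibleRep π)
    (hμ : IsProb μ) (hs : check μ = μ) {E M : ℝ} {J l : ℕ} (hl : l ≠ 0) (hE : 1 ≤ E)
    (hJ : (Fintype.card H : ℝ) < E ^ J) (hM : 4 * Fintype.card H < Module.finrank ℂ W * M)
    (hgrow : ExpandsOrLarge (itconv μ (2 * l)) E M) :
    ‖repOp π μ‖ ^ (2 * l) ≤ 1 - (1 - E⁻¹) / 9 ^ J / 2 := by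
  have := FiniteDimensional.complete ℂ W
  rw [itconv_two_mul] at hgrow
  have hν := hμ.itconv l
  calc ‖repOp π μ‖ ^ (2 * l) = (‖repOp π μ‖ ^ l) ^ 2 := by ring
    _ ≤ ‖repOp π (itconv μ l)‖ ^ 2 := by
        gcongr
        exact hπ.norm_repOp_pow_le hs hl
    _ ≤ _ := hπ.norm_repOp_sq_le_of_displacement hν (check_itconv hs l) fun v hv =>
        hgrow.le_sum_mul_norm_sub_sq (hν.conv hν) hπ hirr hE hJ hM hv

lemma norm_repOp_pow_le_of_expandsOrLarge_of_large_dim (hπ : IsUnitaryRep π)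
    (hirr : IsIrreducibleRep π) (hμ : IsProb μ) (hs : check μ = μ) {X Y : ℝ} {J l₁ : ℕ}
    (hJ : (Fintype.card H : ℝ) < X ^ J) (hX : 2 ^ 10 ≤ X) (hY : 4 ≤ Y)
    (hdim : (Module.finrank ℂ W : ℝ) = Y ^ 3) (hl₁ : l₁ ≠ 0)
    (hgrow : ∀ l, l₁ ≤ l → ExpandsOrLarge (itconv μ l) (X ^ 35) (Y⁻¹ * Fintype.card H)) :
    ‖repOp π μ‖ ^ (4 ^ (J + 1) * l₁) ≤ Y⁻¹ := by
  have := FiniteDimensional.complete ℂ W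
  have hX0 : 0 < X := lt_of_lt_of_le (by norm_num) hX
  obtain ⟨l, hl, hlJ, hflat⟩ := exists_flat_scale hμ hX0.le hJ l₁
  have hν := hμ.itconv l
  have hw := hμ.itconv (2 * l)
  have hws := check_itconv hs (2 * l)
  have hP0 : 0 < ∑ g, itconv μ l g ^ 2 :=
    lt_of_lt_of_le (inv_pos.2 (by exact_mod_cast Fintype.card_pos)) hν.inv_card_le_sum_sq
  have hP : ∀ x, itconv μ (2 * l) x ≤ ∑ g, itconv μ l g ^ 2 := fun x => by
    have hle := conv_check_apply_le (itconv μ l) x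
    rwa [check_itconv hs, ← itconv_two_mul] at hle
  have hfour : itconv μ (4 * l) = conv (itconv μ (2 * l)) (itconv μ (2 * l)) := by
    rw [← itconv_two_mul, ← mul_assoc]
    norm_num
  have hPN := (hfour ▸ hgrow (4 * l) (by omega)).mul_le_of_flat hw hws hP0 hP hX
    (by rw [← hfour, div_le_iff₀' hX0]; exact hflat.le)
  calc ‖repOp π μ‖ ^ (4 ^ (J + 1) * l₁) ≤ ‖repOp π μ‖ ^ (2 * l * 2) :=
        pow_le_pow_of_le_one (norm_nonneg _) (hπ.norm_repOp_le_one hμ) (by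
          rw [pow_succ]; linarith)
    _ = (‖repOp π μ‖ ^ (2 * l)) ^ 2 := pow_mul _ _ _
    _ ≤ ‖repOp π (itconv μ (2 * l))‖ ^ 2 := by
        gcongr
        exact hπ.norm_repOp_pow_le hs (by omega)
    _ ≤ Y⁻¹ := norm_repOp_sq_le_of_flat hπ hirr hw hws hP hX hY hdim (hgrow _ (by omega)) hPN

end SpectralGap

section Assembly

lemma exists_pos_lt_rpow_neg {a B : ℝ} (ha : a < 1) (hB : 0 < B) :
    ∃ s : ℝ, 0 < s ∧ a < B ^ (-s) := by
  have hcont : Continuous fun s : ℝ => B ^ (-s) :=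
    (Real.continuous_const_rpow hB.ne').comp continuous_neg
  have hnear : ∀ᶠ s in nhds (0 : ℝ), a < B ^ (-s) :=
    hcont.continuousAt.eventually (lt_mem_nhds (by simpa using ha))
  obtain ⟨r, hr, hball⟩ := Metric.eventually_nhds_iff.1 hnear
  exact ⟨r / 2, half_pos hr, hball (by simp [abs_of_pos hr, hr])⟩

lemma lt_rpow_neg_div {x B δ s : ℝ} {m l : ℕ} (hB : 1 ≤ B) (hm : m ≠ 0) (hl : l ≠ 0)
    (hx : x ^ (m * l) < B ^ (-s)) (hδ : m * δ ≤ s) : x < B ^ (-(δ / l)) := by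
  have hB0 : 0 ≤ B := zero_le_one.trans hB
  refine lt_of_pow_lt_pow_left₀ (m * l) (Real.rpow_nonneg hB0 _) (hx.trans_le ?_)
  rw [← Real.rpow_mul_natCast hB0]
  refine Real.rpow_le_rpow_of_exponent_le hB ?_
  have hexp : -(δ / l) * ↑(m * l) = -(m * δ) := by push_cast; field_simp
  rw [hexp]
  exact neg_le_neg hδ

lemma one_sub_gap_lt_one {ε : ℝ} (hε : 0 < ε) (J : ℕ) :
    1 - (1 - (2 : ℝ) ^ (-ε)) / 9 ^ J / 2 < 1 := by
  have := sub_pos.2 (Real.rpow_lt_one_of_one_lt_of_neg one_lt_two (neg_lt_zero.2 hε))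
  exact sub_lt_self _ (by positivity)

lemma lt_rpow_pow {N a : ℝ} {J : ℕ} (hN : 1 < N) (ha : 1 < a * J) : N < (N ^ a) ^ J := by
  rw [← Real.rpow_mul_natCast (zero_le_one.trans hN.le)]
  exact Real.self_lt_rpow_of_one_lt hN ha

variable {H : Type*} [Group H] [Fintype H] [DecidableEq H] {W : Type*} [NormedAddCommGroup W]
  [InnerProductSpace ℂ W] [FiniteDimensional ℂ W] [Nontrivial W] {π : H →* (W →L[ℂ] W)}
  {μ : H → ℝ} {ε δ : ℝ} {J l₁ : ℕ}

lemma norm_repOp_pow_le_of_bounded_dim (hπ : IsUnitaryRep π) (hirr : IsIrreducibleRep π)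
    (hμ : IsProb μ) (hs : check μ = μ) (hε : 0 < ε) (hJ : 1 < ε * J) (hl₁ : l₁ ≠ 0)
    (hdim : (64 : ℝ) ≤ Module.finrank ℂ W)
    (hgrow : ExpandsOrLarge (itconv μ (2 * l₁)) ((Fintype.card H : ℝ) ^ ε)
      ((Module.finrank ℂ W : ℝ) ^ (-(1 / 3) : ℝ) * Fintype.card H)) :
    ‖repOp π μ‖ ^ (2 * l₁) ≤ 1 - (1 - 2 ^ (-ε)) / 9 ^ J / 2 := by
  have hdN := finrank_le_card hπ hirr
  have hN : (1 : ℝ) < Fintype.card H := by linarith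
  have hroot : 4 < (Module.finrank ℂ W : ℝ) * (Module.finrank ℂ W : ℝ) ^ (-(1 / 3) : ℝ) :=
    calc (4 : ℝ) < 64 ^ (1 + -(1 / 3) : ℝ) := by
          rw [show (64 : ℝ) = 4 ^ (3 : ℝ) by norm_num, ← Real.rpow_mul (by norm_num)]
          norm_num
      _ ≤ (Module.finrank ℂ W : ℝ) ^ (1 + -(1 / 3) : ℝ) :=
          Real.rpow_le_rpow (by norm_num) hdim (by norm_num)
      _ = _ := by rw [Real.rpow_add (by linarith), Real.rpow_one]
  refine (norm_repOp_pow_le_of_expandsOrLarge hπ hirr hμ hs hl₁ (Real.one_le_rpow hN.le hε.le)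
    (lt_rpow_pow hN hJ) ?_ hgrow).trans ?_
  · rw [← mul_assoc]
    gcongr
  · rw [Real.rpow_neg zero_le_two]
    gcongr
    linarith

lemma norm_repOp_pow_le_of_large_dim (hπ : IsUnitaryRep π) (hirr : IsIrreducibleRep π)
    (hμ : IsProb μ) (hs : check μ = μ) (hε : 0 < ε) (hJ : 35 < ε * J) (hl₁ : l₁ ≠ 0)
    (hdim : (64 : ℝ) ≤ Module.finrank ℂ W) (hdimε : 2 ^ (350 / ε) ≤ (Module.finrank ℂ W : ℝ))
    (hgrow : ∀ l, l₁ ≤ l → ExpandsOrLarge (itconv μ l) ((Fintype.card H : ℝ) ^ ε)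
      ((Module.finrank ℂ W : ℝ) ^ (-(1 / 3) : ℝ) * Fintype.card H)) :
    ‖repOp π μ‖ ^ (4 ^ (J + 1) * l₁) ≤ (Module.finrank ℂ W : ℝ) ^ (-(1 / 3) : ℝ) := by
  have hdN := finrank_le_card hπ hirr
  have hN : (1 : ℝ) < Fintype.card H := by linarith
  have hX : (2 : ℝ) ^ 10 ≤ (Fintype.card H : ℝ) ^ (ε / 35) :=
    calc (2 : ℝ) ^ 10 = (2 ^ (350 / ε)) ^ (ε / 35) := by
          rw [← Real.rpow_mul zero_le_two, ← Real.rpow_natCast]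
          congr 1
          field_simp
          norm_num
      _ ≤ (Fintype.card H : ℝ) ^ (ε / 35) := by gcongr; exact hdimε.trans hdN
  have hXE : ((Fintype.card H : ℝ) ^ (ε / 35)) ^ 35 = (Fintype.card H : ℝ) ^ ε := by
    rw [← Real.rpow_mul_natCast (by positivity)]
    congr 1
    norm_num
  have hY : (4 : ℝ) ≤ (Module.finrank ℂ W : ℝ) ^ (1 / 3 : ℝ) :=
    calc (4 : ℝ) = 64 ^ (1 / 3 : ℝ) := by
          rw [show (64 : ℝ) = 4 ^ (3 : ℝ) by norm_num, ← Real.rpow_mul (by norm_num)]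
          norm_num
      _ ≤ _ := by gcongr
  have hYd : (Module.finrank ℂ W : ℝ) = ((Module.finrank ℂ W : ℝ) ^ (1 / 3 : ℝ)) ^ 3 := by
    rw [← Real.rpow_mul_natCast (by positivity)]
    norm_num
  rw [Real.rpow_neg (by positivity)] at hgrow ⊢
  rw [← hXE] at hgrow
  exact norm_repOp_pow_le_of_expandsOrLarge_of_large_dim hπ hirr hμ hs
    (lt_rpow_pow hN (by linarith)) hX hY hYd hl₁ hgrow

lemma norm_repOp_lt_of_bounded_dim (hπ : IsUnitaryRep π) (hirr : IsIrreducibleRep π)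
    (hμ : IsProb μ) (hs : check μ = μ) (hε : 0 < ε) (hJ : 1 < ε * J) (hl₁ : l₁ ≠ 0)
    (hdim : (64 : ℝ) ≤ Module.finrank ℂ W)
    (hgrow : ExpandsOrLarge (itconv μ (2 * l₁)) ((Fintype.card H : ℝ) ^ ε)
      ((Module.finrank ℂ W : ℝ) ^ (-(1 / 3) : ℝ) * Fintype.card H))
    {D s : ℝ} (hdimD : Module.finrank ℂ W ≤ D) (hs0 : 0 ≤ s)
    (hgap : 1 - (1 - 2 ^ (-ε)) / 9 ^ J / 2 < D ^ (-s)) (hδ : δ ≤ s / 2) :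
    ‖repOp π μ‖ < (1 / 64 * (Module.finrank ℂ W : ℝ)) ^ (-(δ / l₁)) :=
  lt_rpow_neg_div (m := 2) (by linarith) two_ne_zero hl₁
    (calc ‖repOp π μ‖ ^ (2 * l₁) ≤ 1 - (1 - 2 ^ (-ε)) / 9 ^ J / 2 :=
          norm_repOp_pow_le_of_bounded_dim hπ hirr hμ hs hε hJ hl₁ hdim hgrow
      _ < D ^ (-s) := hgap
      _ ≤ (1 / 64 * (Module.finrank ℂ W : ℝ)) ^ (-s) :=
          Real.rpow_le_rpow_of_nonpos (by linarith) (by linarith) (by linarith))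
    ((le_div_iff₀' two_pos).1 hδ)

lemma norm_repOp_lt_of_large_dim (hπ : IsUnitaryRep π) (hirr : IsIrreducibleRep π)
    (hμ : IsProb μ) (hs : check μ = μ) (hε : 0 < ε) (hJ : 35 < ε * J) (hl₁ : l₁ ≠ 0)
    (hdim : (64 : ℝ) ≤ Module.finrank ℂ W) (hdimε : 2 ^ (350 / ε) ≤ (Module.finrank ℂ W : ℝ))
    (hgrow : ∀ l, l₁ ≤ l → ExpandsOrLarge (itconv μ l) ((Fintype.card H : ℝ) ^ ε)
      ((Module.finrank ℂ W : ℝ) ^ (-(1 / 3) : ℝ) * Fintype.card H))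
    (hδ : δ ≤ 1 / 3 / 4 ^ (J + 1)) :
    ‖repOp π μ‖ < (1 / 64 * (Module.finrank ℂ W : ℝ)) ^ (-(δ / l₁)) := by
  refine lt_rpow_neg_div (m := 4 ^ (J + 1)) (s := 1 / 3) (by linarith) (by positivity) hl₁ ?_ ?_
  · calc ‖repOp π μ‖ ^ (4 ^ (J + 1) * l₁) ≤ (Module.finrank ℂ W : ℝ) ^ (-(1 / 3) : ℝ) :=
          norm_repOp_pow_le_of_large_dim hπ hirr hμ hs hε hJ hl₁ hdim hdimε hgrow
      _ < (1 / 64 * (Module.finrank ℂ W : ℝ)) ^ (-(1 / 3) : ℝ) :=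
          Real.rpow_lt_rpow_of_neg (by linarith) (by linarith) (by norm_num)
  · push_cast
    exact (le_div_iff₀' (by positivity)).1 hδ

end Assembly

open Pointwise in
/-- (The Bourgain–Gamburd machine.) There is an absolute constant `C`, and
for every `ε > 0` a `δ > 0`, such that: if `G` is a finite group, `π` an irreducible unitary
representation of `G`, `μ` a symmetric probability measure on `G`, and `l₁ > 0` an integer
such that every symmetric `A ⊆ G` with `μ^{*(l)}(A) ≥ |G|^{−ε}` for some `l ≥ l₁` satisfies
`|Π₃A| ≥ |G|^ε·|A|` or `|A| ≥ (dim π)^{−1/3}·|G|`, then `‖π(μ)‖ < (C·dim π)^{−δ/l₁}`. -/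
theorem statement13 :
    ∃ C : ℝ, 0 < C ∧ ∀ ε : ℝ, 0 < ε → ∃ δ : ℝ, 0 < δ ∧
      ∀ (G : Type) [Group G] [Fintype G] [DecidableEq G],
      ∀ (W : Type) [NormedAddCommGroup W] [InnerProductSpace ℂ W]
        [FiniteDimensional ℂ W] [Nontrivial W],
      ∀ π : G →* (W →L[ℂ] W),
        (∀ (g : G) (v : W), ‖π g v‖ = ‖v‖) →
        (∀ U : Submodule ℂ W, (∀ g : G, ∀ u ∈ U, π g u ∈ U) → U = ⊥ ∨ U = ⊤) →
        ∀ μ : G → ℝ, IsProb μ → (∀ g : G, μ g⁻¹ = μ g) →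
        ∀ l₁ : ℕ, 0 < l₁ →
        (∀ A : Finset G, (∀ a ∈ A, a⁻¹ ∈ A) →
          (∃ l : ℕ, l₁ ≤ l ∧ (Fintype.card G : ℝ) ^ (-ε) ≤ ∑ g ∈ A, itconv μ l g) →
          ((Fintype.card G : ℝ) ^ ε * (A.card : ℝ) ≤ ((A ^ 3).card : ℝ) ∨
            (Module.finrank ℂ W : ℝ) ^ (-(1 / 3 : ℝ)) * (Fintype.card G : ℝ) ≤
              (A.card : ℝ))) →
        ‖∑ g : G, (μ g : ℂ) • π g‖ <
          (C * (Module.finrank ℂ W : ℝ)) ^ (-(δ / (l₁ : ℝ))) := by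
  refine ⟨1 / 64, by norm_num, fun ε hε => ?_⟩
  obtain ⟨J, hJ⟩ := exists_nat_gt (35 / ε)
  rw [div_lt_iff₀' hε] at hJ
  obtain ⟨s, hs0, hgap⟩ :=
    exists_pos_lt_rpow_neg (B := 2 ^ (350 / ε)) (one_sub_gap_lt_one hε J) (by positivity)
  refine ⟨min (s / 2) (1 / 3 / 4 ^ (J + 1)), by positivity, ?_⟩
  intro G _ _ _ W _ _ _ _ π hπ hirr μ hμ hsymm l₁ hl₁ hgrow
  change ‖repOp π μ‖ < _
  have hs : check μ = μ := funext hsymm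
  have hgrow' : ∀ l, l₁ ≤ l → ExpandsOrLarge (itconv μ l) _ _ := fun l hl A hA hm =>
    hgrow A hA ⟨l, hl, (Real.rpow_neg (Nat.cast_nonneg _) ε).trans_le hm⟩
  rcases lt_or_ge (Module.finrank ℂ W : ℝ) 64 with hsmall | hdim
  · have hd0 : (0 : ℝ) < Module.finrank ℂ W := by exact_mod_cast Module.finrank_pos
    exact (IsUnitaryRep.norm_repOp_le_one hπ hμ).trans_lt <|
      Real.one_lt_rpow_of_pos_of_lt_one_of_neg (by positivity) (by linarith)
        (neg_lt_zero.2 (by positivity))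
  rcases le_total (Module.finrank ℂ W : ℝ) (2 ^ (350 / ε)) with hbdd | hlarge
  · exact norm_repOp_lt_of_bounded_dim hπ hirr hμ hs hε (by linarith) hl₁.ne' hdim
      (hgrow' _ (by omega)) hbdd hs0.le hgap (min_le_left _ _)
  · exact norm_repOp_lt_of_large_dim hπ hirr hμ hs hε hJ hl₁.ne' hdim hlarge hgrow'
      (min_le_right _ _)

end Paper
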